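/- arXiv:math/0609586 — 4 statements merged into one kernel-verified Lean document; each statement's English description precedes it below -/
import Mathlib

section
/- Let p be a prime with p ≡ 3 (mod 4), m an odd positive integer, and G an abelian p-group of order p^m, written additively. Let D be a subset of G such that D ∩ (−D) = ∅ and D ∪ (−D) = G \ {0}, and such that tD = D for every integer t that is a nonzero quadratic residue modulo p. If for every nontrivial complex character φ of G the algebraic number (φ(D) − (p^{(m−1)/2} − 1)/2) / p^{(m−1)/2} is an algebraic integer (i.e., φ(D) ≡ (p^{(m−1)/2} − 1)/2 modulo p^{(m−1)/2} in the ring of algebraic integers), then D is a (p^m, (p^m − 1)/2, (p^m − 3)/4) difference set in G. -/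
/-- `D` is a `(v,k,λ)` difference set in the finite abelian group `G`. -/
def IsDiffSet {G : Type*} [AddCommGroup G] (D : Set G) (v k l : ℕ) : Prop :=
  Nat.card G = v ∧ Nat.card D = k ∧
    ∀ g : G, g ≠ 0 → Nat.card {p : G × G | p.1 ∈ D ∧ p.2 ∈ D ∧ p.1 - p.2 = g} = l

theorem aux_gs (p : ℕ) [Fact p.Prime] (hp4 : p % 4 = 3) :
    ∃ g : ℂ, g ^ 2 = -p ∧ ∀ z : ℂ, z ^ p = 1 → ∃ c : ℤ,
      ∑ r ∈ Finset.range p, ((quadraticChar (ZMod p) (r : ZMod p) : ℤ) : ℂ) * z ^ r = c * g := by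
  have hp : p.Prime := Fact.out
  have hchar : ringChar (ZMod p) ≠ 2 := by rw [ZMod.ringChar_zmod_n]; omega
  have hω := Complex.isPrimitiveRoot_exp p hp.ne_zero
  set ω := Complex.exp (2 * Real.pi * Complex.I / p)
  set χ : MulChar (ZMod p) ℂ := (quadraticChar (ZMod p)).ringHomComp (Int.castRingHom ℂ) with hχ
  have hχa : ∀ a, χ a = ((quadraticChar (ZMod p) a : ℤ) : ℂ) := fun a => rfl
  have hχ1 : χ ≠ 1 := by
    have := quadraticChar_ne_one hchar
    rwa [hχ, MulChar.ringHomComp_ne_one_iff (Int.cast_injective)]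
  have hχq : χ.IsQuadratic := (quadraticChar_isQuadratic (ZMod p)).comp _
  set ψ := AddChar.zmodChar p hω.pow_eq_one with hψ
  have hψp : ψ.IsPrimitive := AddChar.zmodChar_primitive_of_primitive_root p hω
  refine ⟨gaussSum χ ψ, ?_, ?_⟩
  · rw [gaussSum_sq hχ1 hχq hψp, hχa, quadraticChar_neg_one hchar, ZMod.card,
      ZMod.χ₄_nat_three_mod_four hp4]
    simp
  · intro z hz
    obtain ⟨i, hi, rfl⟩ := hω.eq_pow_of_pow_eq_one hz
    have key : ∑ r ∈ Finset.range p, ((quadraticChar (ZMod p) (r : ZMod p) : ℤ) : ℂ) * (ω ^ i) ^ r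
        = gaussSum χ (ψ.mulShift (i : ZMod p)) := by
      unfold gaussSum
      symm
      refine Finset.sum_bij (fun a _ => a.val) ?_ ?_ ?_ ?_
      · intro a _; simpa using ZMod.val_lt a
      · intro a _ b _ h; exact ZMod.val_injective p h
      · intro b hb
        exact ⟨(b : ZMod p), Finset.mem_univ _, ZMod.val_cast_of_lt (by simpa using hb)⟩
      · intro a _
        rw [hχa, AddChar.mulShift_apply]
        conv_lhs => rw [← ZMod.natCast_zmod_val a]
        rw [← Nat.cast_mul, hψ, AddChar.zmodChar_apply', pow_mul]
    rw [key]
    by_cases h0 : (i : ZMod p) = 0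
    · refine ⟨0, ?_⟩
      rw [h0, AddChar.mulShift_zero, gaussSum_one_right hχ1]; simp
    · refine ⟨quadraticChar (ZMod p) (i : ZMod p), ?_⟩
      have := gaussSum_mulShift χ ψ (Units.mk0 _ h0)
      rw [Units.val_mk0] at this
      rw [← this, ← hχa, ← mul_assoc, ← pow_two, ← MulChar.pow_apply' _ two_ne_zero, hχq.sq_eq_one,
        MulChar.one_apply (isUnit_iff_ne_zero.2 h0), one_mul]

theorem aux_split (p M : ℕ) (z : ℂ) (f : ZMod p → ℂ) :
    ∑ n ∈ Finset.range (p * M), f (n : ZMod p) * z ^ n =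
      (∑ k ∈ Finset.range M, (z ^ p) ^ k) * ∑ r ∈ Finset.range p, f (r : ZMod p) * z ^ r := by
  induction M with
  | zero => simp
  | succ M ih =>
    rw [Nat.mul_succ, Finset.sum_range_add, ih, Finset.sum_range_succ, add_mul]
    congr 1
    rw [Finset.mul_sum]
    refine Finset.sum_congr rfl fun r _ => ?_
    push_cast
    simp only [CharP.cast_eq_zero, zero_mul, zero_add]
    ring

theorem aux_T (p : ℕ) [Fact p.Prime] (hp4 : p % 4 = 3) :
    ∃ g : ℂ, g ^ 2 = -p ∧ ∀ (M : ℕ) (z : ℂ), z ^ (p * M) = 1 → ∃ c : ℤ,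
      ∑ r ∈ Finset.range (p * M), ((quadraticChar (ZMod p) (r : ZMod p) : ℤ) : ℂ) * z ^ r
        = c * g := by
  obtain ⟨g, hg, h⟩ := aux_gs p hp4
  refine ⟨g, hg, fun M z hz => ?_⟩
  rw [aux_split p M z (fun a => ((quadraticChar (ZMod p) a : ℤ) : ℂ))]
  by_cases h1 : z ^ p = 1
  · obtain ⟨c, hc⟩ := h z h1
    refine ⟨M * c, ?_⟩
    rw [hc, h1]; simp; ring
  · refine ⟨0, ?_⟩
    rw [geom_sum_eq h1, ← pow_mul, hz]; simp

theorem aux_ratio (p : ℕ) (hp : p.Prime) (y g : ℂ) (hg : g ^ 2 = -p) (K c : ℤ) (hK : K ≠ 0)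
    (h : K * y = c * g) (hy : IsIntegral ℤ ((y - 1) / 2)) :
    ∃ r : ℤ, r ≠ 0 ∧ y ^ 2 = -(p * r ^ 2 : ℤ) := by
  have hyi : IsIntegral ℤ y := by
    have : y = 2 * ((y - 1) / 2) + 1 := by ring
    rw [this]
    exact ((isIntegral_algebraMap (x := (2 : ℤ))).mul hy).add isIntegral_one
  have hKC : (K : ℂ) ≠ 0 := by exact_mod_cast hK
  have hy2 : y ^ 2 = (((-(p * c ^ 2) / K ^ 2 : ℚ)) : ℂ) := by
    push_cast
    rw [eq_div_iff (pow_ne_zero 2 hKC)]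
    linear_combination (K * y + c * g) * h + c ^ 2 * hg
  have hint : IsIntegral ℤ (-(p * c ^ 2) / K ^ 2 : ℚ) := by
    have := hyi.pow 2
    rw [hy2] at this
    exact (isIntegral_algebraMap_iff (algebraMap ℚ ℂ).injective).1 this
  obtain ⟨N, hN⟩ := IsIntegrallyClosed.isIntegral_iff.1 hint
  have hKQ : (K : ℚ) ≠ 0 := by exact_mod_cast hK
  have hN' : N * K ^ 2 = -(p * c ^ 2) := by
    rw [eq_div_iff (pow_ne_zero 2 hKQ)] at hN
    simp at hN
    exact_mod_cast hN
  -- K ^ 2 ∣ (p c)^2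
  have hd : K ^ 2 ∣ (p * c) ^ 2 := ⟨-(p * N), by linear_combination p * hN'⟩
  rw [Int.pow_dvd_pow_iff two_ne_zero] at hd
  obtain ⟨s, hs⟩ := hd
  have hs2 : s ^ 2 = -(p * N) := by
    have : K ^ 2 * s ^ 2 = K ^ 2 * (-(p * N)) := by
      linear_combination (-(p * c + K * s)) * hs + p * hN'
    exact mul_left_cancel₀ (pow_ne_zero 2 hK) this
  have hps : (p : ℤ) ∣ s :=
    (Nat.prime_iff_prime_int.1 hp).dvd_of_dvd_pow (n := 2) ⟨-N, by rw [hs2]; ring⟩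
  obtain ⟨r, rfl⟩ := hps
  have hp0 : (p : ℤ) ≠ 0 := by exact_mod_cast hp.ne_zero
  have hNr : N = -(p * r ^ 2) := by
    apply mul_left_cancel₀ hp0
    linear_combination hs2
  have hyN : y ^ 2 = (N : ℂ) := by
    rw [hy2, ← hN]; simp
  refine ⟨r, ?_, ?_⟩
  · rintro rfl
    have : y = 0 := by
      have : y ^ 2 = 0 := by rw [hyN, hNr]; simp
      exact pow_eq_zero_iff two_ne_zero |>.1 this
    subst this
    have h2 : IsIntegral ℤ (-1 / 2 : ℚ) := by
      refine (isIntegral_algebraMap_iff (B := ℂ) (algebraMap ℚ ℂ).injective).1 ?_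
      simpa using hy
    obtain ⟨n, hn⟩ := IsIntegrallyClosed.isIntegral_iff.1 h2
    have : (2 * n : ℚ) = -1 := by simp at hn; rw [hn]; norm_num
    have : (2 * n : ℤ) = -1 := by exact_mod_cast this
    omega
  · rw [hyN, hNr]; push_cast; ring

theorem aux_sum {G : Type*} [AddCommGroup G] [Fintype G] [DecidableEq G] (F : Finset G)
    (h1 : ∀ d, d ∈ F → -d ∉ F) (h2 : ∀ d, d ≠ 0 → d ∈ F ∨ -d ∈ F) (h : G → ℂ) :
    ∑ d ∈ F, h d + ∑ d ∈ F, h (-d) + h 0 = ∑ d, h d := by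
  have h0 : (0 : G) ∉ F := fun hh => h1 0 hh (by simpa using hh)
  have hc : Fᶜ = insert 0 (F.image (fun d => -d)) := by
    ext d
    simp only [Finset.mem_compl, Finset.mem_insert, Finset.mem_image]
    constructor
    · intro hd
      by_cases hd0 : d = 0
      · exact Or.inl hd0
      · exact Or.inr ⟨-d, (h2 d hd0).resolve_left hd, neg_neg d⟩
    · rintro (rfl | ⟨e, he, rfl⟩)
      · exact h0
      · exact h1 e he
  rw [← Finset.sum_add_sum_compl F h, hc, Finset.sum_insert, Finset.sum_image]
  · ring
  · intro a _ b _ hab; exact neg_injective hab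
  · simp only [Finset.mem_image, not_exists, not_and, neg_eq_zero]
    rintro x hx rfl
    exact h0 hx

theorem aux_inv {G : Type*} [AddCommGroup G] [Fintype G] [DecidableEq G] (F : Finset G) (g : G) :
    ∑ φ : AddChar G ℂ, ((∑ d ∈ F, φ d) * ∑ d ∈ F, φ (-d)) * φ (-g) =
      Fintype.card G * (((F ×ˢ F).filter (fun q => q.1 - q.2 = g)).card : ℂ) := by
  have : ∀ φ : AddChar G ℂ, ((∑ d ∈ F, φ d) * ∑ d ∈ F, φ (-d)) * φ (-g)
      = ∑ q ∈ F ×ˢ F, φ (q.1 - q.2 - g) := by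
    intro φ
    rw [Finset.sum_mul_sum, ← Finset.sum_product', Finset.sum_mul]
    refine Finset.sum_congr rfl fun q _ => ?_
    rw [sub_eq_add_neg, sub_eq_add_neg, AddChar.map_add_eq_mul, AddChar.map_add_eq_mul]
  simp_rw [this]
  rw [Finset.sum_comm]
  simp_rw [AddChar.sum_apply_eq_ite, sub_eq_zero]
  rw [← Finset.sum_filter, Finset.sum_const, nsmul_eq_mul, mul_comm]

theorem aux_twist {G : Type*} [AddCommGroup G] [Fintype G] (p : ℕ) [Fact p.Prime]
    (hp4 : p % 4 = 3) (D : Set G) (F : Finset G) (hFD : ∀ d, d ∈ F ↔ d ∈ D)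
    (hfix : ∀ t : ℤ, ¬ (p : ℤ) ∣ t → (∃ u : ℤ, (p : ℤ) ∣ t - u ^ 2) →
      (fun d => t • d) '' D = D) (φ : AddChar G ℂ) (n : ℕ) :
    ((quadraticChar (ZMod p) (n : ZMod p) : ℤ) : ℂ) * ∑ d ∈ F, (φ d ^ n - φ (-d) ^ n) =
      ((quadraticChar (ZMod p) (n : ZMod p) : ℤ) : ℂ) ^ 2 * ∑ d ∈ F, (φ d - φ (-d)) := by
  classical
  have hp : p.Prime := Fact.out
  have hchar : ringChar (ZMod p) ≠ 2 := by rw [ZMod.ringChar_zmod_n]; omega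
  have hsq : ∀ t : ℤ, quadraticChar (ZMod p) (t : ZMod p) = 1 → ∀ h : G → ℂ,
      ∑ d ∈ F, h (t • d) = ∑ d ∈ F, h d := by
    intro t ht h
    have ht0 : (t : ZMod p) ≠ 0 := by
      intro h0; rw [h0] at ht; simp at ht
    have him : F.image (fun d => t • d) = F := by
      have hf := hfix t (by rwa [← ZMod.intCast_zmod_eq_zero_iff_dvd]) (by
        obtain ⟨u, hu⟩ := (quadraticChar_one_iff_isSquare ht0).1 ht
        refine ⟨(u.val : ℤ), ?_⟩
        rw [← ZMod.intCast_zmod_eq_zero_iff_dvd]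
        push_cast
        rw [hu, ZMod.natCast_zmod_val]; ring)
      have hF : (F : Set G) = D := by ext d; simpa using hFD d
      apply Finset.coe_injective
      rw [Finset.coe_image, hF, hf]
    have hinj : Set.InjOn (fun d => t • d) (F : Set G) :=
      Finset.card_image_iff.1 (by rw [him])
    conv_rhs => rw [← him]
    rw [Finset.sum_image hinj]
  have e : ∀ d : G, φ d ^ n - φ (-d) ^ n = φ ((n : ℤ) • d) - φ (-((n : ℤ) • d)) := by
    intro d
    rw [← AddChar.map_nsmul_eq_pow, ← AddChar.map_nsmul_eq_pow, natCast_zsmul, smul_neg]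
  simp_rw [e]
  by_cases h0 : (n : ZMod p) = 0
  · rw [h0]; simp
  rcases quadraticChar_dichotomy h0 with h1 | h1
  · rw [h1, hsq n (by simpa using h1) (fun d => φ d - φ (-d))]; simp
  · have h2 := hsq (-n) (by
      push_cast
      rw [neg_eq_neg_one_mul, map_mul, h1, quadraticChar_neg_one hchar, ZMod.card,
        ZMod.χ₄_nat_three_mod_four hp4]; norm_num) (fun d => φ d - φ (-d))
    rw [h1, ← h2, Finset.mul_sum, Finset.mul_sum]
    refine Finset.sum_congr rfl fun d _ => ?_
    rw [neg_smul, neg_neg]; push_cast; ring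

theorem aux_char {G : Type*} [AddCommGroup G] [Fintype G] (p m : ℕ) [Fact p.Prime]
    (hp4 : p % 4 = 3) (hm : m ≠ 0) (hcard : Fintype.card G = p ^ m) (D : Set G) (F : Finset G)
    (hFD : ∀ d, d ∈ F ↔ d ∈ D)
    (hfix : ∀ t : ℤ, ¬ (p : ℤ) ∣ t → (∃ u : ℤ, (p : ℤ) ∣ t - u ^ 2) →
      (fun d => t • d) '' D = D) (φ : AddChar G ℂ) :
    ∃ g : ℂ, g ^ 2 = -p ∧ ∃ K c : ℤ, K ≠ 0 ∧ K * ∑ d ∈ F, (φ d - φ (-d)) = c * g := by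
  have hp : p.Prime := Fact.out
  obtain ⟨g, hg, hT⟩ := aux_T p hp4
  obtain ⟨M, hM⟩ : ∃ M, p ^ m = p * M := dvd_pow_self p hm
  have hz : ∀ d : G, φ d ^ (p * M) = 1 := by
    intro d
    rw [← AddChar.map_nsmul_eq_pow, ← hM, ← hcard, card_nsmul_eq_zero, AddChar.map_zero_eq_one]
  have hT' : ∀ d : G, ∃ c : ℤ, ∑ r ∈ Finset.range (p * M),
      ((quadraticChar (ZMod p) (r : ZMod p) : ℤ) : ℂ) * φ d ^ r = c * g := fun d => hT M _ (hz d)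
  choose a ha using hT'
  refine ⟨g, hg, ∑ n ∈ Finset.range (p * M), (quadraticChar (ZMod p) (n : ZMod p)) ^ 2,
    ∑ d ∈ F, (a d - a (-d)), ?_, ?_⟩
  · apply ne_of_gt
    refine Finset.sum_pos' (fun i _ => sq_nonneg _) ⟨1, ?_, by simp⟩
    rw [Finset.mem_range, ← hM]
    exact Nat.one_lt_pow hm hp.one_lt
  · push_cast
    rw [Finset.sum_mul]
    simp_rw [← aux_twist p hp4 D F hFD hfix φ, Finset.mul_sum]
    rw [Finset.sum_comm, Finset.sum_mul]
    refine Finset.sum_congr rfl fun d _ => ?_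
    rw [sub_mul, ← ha, ← ha, ← Finset.sum_sub_distrib]
    refine Finset.sum_congr rfl fun n _ => ?_
    ring

theorem congruence_implies_diffSet {G : Type*} [AddCommGroup G] [Fintype G]
    (p m : ℕ) (hp : p.Prime) (hp4 : p % 4 = 3) (hm : Odd m)
    (hcard : Fintype.card G = p ^ m)
    (D : Set G)
    (hdisj : Disjoint D (-D)) (hcover : D ∪ (-D) = ({0}ᶜ : Set G))
    (hfix : ∀ t : ℤ, ¬ (p : ℤ) ∣ t → (∃ u : ℤ, (p : ℤ) ∣ t - u ^ 2) →
      (fun d => t • d) '' D = D)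
    (hcong : ∀ φ : AddChar G ℂ, φ ≠ 1 →
      IsIntegral ℤ
        (((∑ᶠ d ∈ D, φ d) - ((p : ℂ) ^ ((m - 1) / 2) - 1) / 2) / (p : ℂ) ^ ((m - 1) / 2))) :
    IsDiffSet D (p ^ m) ((p ^ m - 1) / 2) ((p ^ m - 3) / 4) := by
  classical
  have : Fact p.Prime := ⟨hp⟩
  obtain ⟨j, rfl⟩ := hm
  have hj : (2 * j + 1 - 1) / 2 = j := by omega
  rw [hj] at hcong
  set F : Finset G := D.toFinset with hF
  have hFD : ∀ d, d ∈ F ↔ d ∈ D := fun d => by simp [hF]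
  have h1 : ∀ d, d ∈ F → -d ∉ F := by
    intro d hd hnd
    rw [hFD] at hd hnd
    exact Set.disjoint_left.1 hdisj hd hnd
  have h2 : ∀ d, d ≠ 0 → d ∈ F ∨ -d ∈ F := by
    intro d hd
    rw [hFD, hFD]
    have : d ∈ D ∪ -D := by rw [hcover]; exact hd
    exact this
  set v : ℕ := p ^ (2 * j + 1) with hv
  have hv4 : v % 4 = 3 := by
    rw [hv, Nat.pow_mod, hp4, pow_succ, pow_mul, Nat.mul_mod, Nat.pow_mod]; norm_num
  have hk : 2 * F.card + 1 = v := by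
    have := aux_sum F h1 h2 (fun _ => 1)
    simp only [Finset.sum_const, nsmul_eq_mul, mul_one, Finset.card_univ, hcard] at this
    have h3 : F.card + F.card + 1 = v := by exact_mod_cast this
    omega
  have hpq : (p : ℂ) ^ j ≠ 0 := pow_ne_zero _ (by exact_mod_cast hp.ne_zero)
  -- character values
  have hA : ∀ φ : AddChar G ℂ, ∃ r : ℤ, φ ≠ 1 → r ≠ 0 ∧
      4 * ((∑ d ∈ F, φ d) * ∑ d ∈ F, φ (-d)) = 1 + v * r ^ 2 := by
    intro φ
    by_cases hφ : φ = 1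
    · exact ⟨0, fun h => (h hφ).elim⟩
    have hs : ∑ d ∈ F, φ d + ∑ d ∈ F, φ (-d) = -1 := by
      have := aux_sum F h1 h2 φ
      rw [AddChar.sum_eq_zero_of_ne_one hφ, AddChar.map_zero_eq_one] at this
      linear_combination this
    obtain ⟨g, hg, K, c, hK, hKc⟩ := aux_char p (2 * j + 1) hp4 (by omega) hcard D F hFD hfix φ
    have hi := hcong φ hφ
    rw [finsum_mem_eq_toFinset_sum, ← hF] at hi
    rw [Finset.sum_sub_distrib] at hKc
    set s := ∑ d ∈ F, φ d
    set s' := ∑ d ∈ F, φ (-d)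
    have hy : (((s - s') / p ^ j) - 1) / 2 = (s - ((p : ℂ) ^ j - 1) / 2) / p ^ j := by
      field_simp
      linear_combination -hs
    rw [← hy] at hi
    obtain ⟨r, hr0, hr⟩ := aux_ratio p hp ((s - s') / p ^ j) g hg (K * p ^ j) c
      (mul_ne_zero hK (pow_ne_zero _ (by exact_mod_cast hp.ne_zero))) (by
        rw [← hKc]; push_cast; field_simp) hi
    refine ⟨r, fun _ => ⟨hr0, ?_⟩⟩
    rw [div_pow, div_eq_iff (pow_ne_zero 2 hpq)] at hr
    rw [hv]
    push_cast at hr ⊢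
    linear_combination (s + s' - 1) * hs - hr
  choose r hr using hA
  have hcardχ : (Finset.univ.erase (1 : AddChar G ℂ)).card = v - 1 := by
    rw [Finset.card_erase_of_mem (Finset.mem_univ _), Finset.card_univ, AddChar.card_eq, hcard]
  have hone : ∀ g : G, ((∑ d ∈ F, (1 : AddChar G ℂ) d) * ∑ d ∈ F, (1 : AddChar G ℂ) (-d)) *
      (1 : AddChar G ℂ) (-g) = (F.card : ℂ) ^ 2 := by
    intro g; simp [pow_two]
  have hvC : (v : ℂ) = 2 * F.card + 1 := by rw [← hk]; push_cast; ring
  have hvpos : 1 ≤ v := by omega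
  have hvC0 : (v : ℂ) ≠ 0 := by exact_mod_cast (by omega : v ≠ 0)
  have hr1 : ∀ φ : AddChar G ℂ, φ ≠ 1 → r φ ^ 2 = 1 := by
    have h0 := aux_inv F (0 : G)
    have hdiag : ((F ×ˢ F).filter (fun q => q.1 - q.2 = 0)).card = F.card := by
      have : (F ×ˢ F).filter (fun q => q.1 - q.2 = 0) = F.diag := by
        ext ⟨a, b⟩
        simp only [Finset.mem_filter, Finset.mem_product, sub_eq_zero, Finset.mem_diag]
        constructor
        · rintro ⟨⟨h, _⟩, h'⟩; exact ⟨h, h'⟩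
        · rintro ⟨h, rfl⟩; exact ⟨⟨h, h⟩, rfl⟩
      rw [this, Finset.diag_card]
    rw [hdiag, hcard, ← Finset.add_sum_erase _ _ (Finset.mem_univ (1 : AddChar G ℂ)), hone] at h0
    have hsum : ∑ φ ∈ Finset.univ.erase (1 : AddChar G ℂ), (r φ ^ 2 - 1) = 0 := by
      have e : ∑ φ ∈ Finset.univ.erase (1 : AddChar G ℂ),
          ((∑ d ∈ F, φ d) * ∑ d ∈ F, φ (-d)) * φ (-0) =
          ∑ φ ∈ Finset.univ.erase (1 : AddChar G ℂ), ((v / 4 : ℂ) * (r φ ^ 2 - 1) + (v + 1) / 4) := by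
        refine Finset.sum_congr rfl fun φ hφ => ?_
        rw [neg_zero, AddChar.map_zero_eq_one]
        linear_combination (hr φ (Finset.ne_of_mem_erase hφ)).2 / 4
      rw [e, Finset.sum_add_distrib, ← Finset.mul_sum, Finset.sum_const, hcardχ, nsmul_eq_mul,
        Nat.cast_sub hvpos] at h0
      have : (v : ℂ) * ∑ φ ∈ Finset.univ.erase (1 : AddChar G ℂ), ((r φ : ℂ) ^ 2 - 1) = 0 := by
        push_cast at h0
        rw [hvC] at h0 ⊢
        linear_combination 4 * h0
      have := (mul_eq_zero.1 this).resolve_left hvC0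
      exact_mod_cast this
    rw [Finset.sum_eq_zero_iff_of_nonneg] at hsum
    · intro φ hφ
      have := hsum φ (Finset.mem_erase.2 ⟨hφ, Finset.mem_univ _⟩)
      linarith
    · intro φ hφ
      have h := (hr φ (Finset.ne_of_mem_erase hφ)).1
      have := sq_pos_of_ne_zero h
      linarith
  refine ⟨by rw [Nat.card_eq_fintype_card, hcard], ?_, ?_⟩
  · rw [Nat.card_eq_fintype_card, ← Set.toFinset_card, ← hF]
    omega
  · intro g hg
    have hcf : Nat.card {q : G × G | q.1 ∈ D ∧ q.2 ∈ D ∧ q.1 - q.2 = g} =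
        ((F ×ˢ F).filter (fun q => q.1 - q.2 = g)).card := by
      rw [Nat.card_eq_fintype_card, ← Set.toFinset_card]
      congr 1
      ext q
      simp [hFD, and_assoc]
    rw [hcf]
    have h0 := aux_inv F g
    rw [hcard, ← Finset.add_sum_erase _ _ (Finset.mem_univ (1 : AddChar G ℂ)), hone] at h0
    have e : ∑ φ ∈ Finset.univ.erase (1 : AddChar G ℂ),
          ((∑ d ∈ F, φ d) * ∑ d ∈ F, φ (-d)) * φ (-g) = -((v + 1) / 4 : ℂ) := by
      have e1 : ∑ φ ∈ Finset.univ.erase (1 : AddChar G ℂ),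
          ((∑ d ∈ F, φ d) * ∑ d ∈ F, φ (-d)) * φ (-g) =
          ∑ φ ∈ Finset.univ.erase (1 : AddChar G ℂ), ((v + 1) / 4 : ℂ) * φ (-g) := by
        refine Finset.sum_congr rfl fun φ hφ => ?_
        have hφ := Finset.ne_of_mem_erase hφ
        have hrr : (r φ : ℂ) ^ 2 = 1 := by exact_mod_cast hr1 φ hφ
        have := (hr φ hφ).2
        rw [hrr] at this
        linear_combination φ (-g) * this / 4
      have e2 := Finset.add_sum_erase _ (fun φ : AddChar G ℂ => φ (-g))
        (Finset.mem_univ (1 : AddChar G ℂ))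
      rw [AddChar.sum_apply_eq_ite, if_neg (neg_ne_zero.2 hg)] at e2
      simp only [AddChar.one_apply] at e2
      rw [e1, ← Finset.mul_sum]
      linear_combination ((v + 1) / 4 : ℂ) * e2
    rw [e] at h0
    set f := ((F ×ˢ F).filter (fun q => q.1 - q.2 = g)).card
    have hf : (v : ℂ) * (4 * f + 3) = v * v := by
      rw [hvC] at h0 ⊢
      linear_combination -4 * h0
    have hf' : 4 * f + 3 = v := by
      have := mul_left_cancel₀ hvC0 hf
      exact_mod_cast this
    omega
end

section
/- Let q = 3^{2h+1} with h ≥ 0, α = 3^{h+1}, and let a ∈ F_q*. Then the set D_a = {f_a(x²) : x ∈ F_q*}, where f_a(x) = x^{2α+3} + a^α x^α − a² x, is a skew Hadamard difference set in the additive group (F_q, +); that is, D_a is a (q, (q−1)/2, (q−3)/4) difference set and F_q is the disjoint union of D_a, −D_a, and {0}. -/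
/-- `D` is skew Hadamard: `G` is the disjoint union of `D`, `-D` and `{0}`. -/
def IsSkewHadamard {G : Type*} [AddCommGroup G] (D : Set G) : Prop :=
  Disjoint D (-D) ∧ (0 : G) ∉ D ∧ D ∪ (-D) ∪ {0} = Set.univ


theorem rt_cyc (n : ℕ) [NeZero n] (e r : ZMod n → ℤ) (h1 : ∀ t, -r t ≤ e t) (h2 : ∀ t, e t ≤ r t)
    (h3 : ∀ t, r (t - 1) - e (t - 1) + r (t - 2) ≤ r t + 2 * e t + 1) : 0 ≤ ∑ t, e t := by
  classical
  let s : ZMod n → ℤ := fun t => r t - e t + r (t - 1)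
  let φ : ZMod n → ℤ := fun t => if s t = 1 then -(r t / 3) else -((s t + r t) / 3)
  have key : ∀ t, φ t - φ (t - 1) ≤ e t := by
    intro t
    have a1 := h1 t
    have a2 := h2 t
    have a3 := h3 t
    have b1 := h1 (t - 1)
    have b2 := h2 (t - 1)
    have c1 := h1 (t - 2)
    have c2 := h2 (t - 2)
    have e2 : t - 1 - 1 = t - 2 := by ring
    simp only [φ, s, e2]
    split_ifs <;> omega
  have hs : ∑ t, (φ t - φ (t - 1)) = 0 := by
    rw [Finset.sum_sub_distrib, sub_eq_zero]
    exact ((Equiv.subRight (1 : ZMod n)).sum_comp φ).symm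
  rw [← hs]
  exact Finset.sum_le_sum fun t _ => key t

theorem rt_two (h : ℕ) : (2 : ZMod (2 * h + 1)) * ((h : ZMod (2 * h + 1)) + 1) = 1 := by
  have : ((2 * h + 1 : ℕ) : ZMod (2 * h + 1)) = 0 := ZMod.natCast_self _
  push_cast at this
  linear_combination this

theorem rt_weight (h : ℕ) (A B C : ZMod (2 * h + 1) → ℤ) (hA : ∀ t, 0 ≤ A t) (hB : ∀ t, 0 ≤ B t)
    (hC : ∀ t, 1 ≤ C t)
    (hr : ∀ t, 3 * C t - C (t - 2) = A (t - 1) + 2 * A (t - 2) + A (t - 3) + 2 * B t)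
    (hodd : Odd (∑ t, A t + ∑ t, B t)) : (2 * h + 1 : ℤ) ≤ ∑ t, A t + ∑ t, B t := by
  classical
  have shift : ∀ (f : ZMod (2 * h + 1) → ℤ) (k : ZMod (2 * h + 1)), ∑ t, f (t - k) = ∑ t, f t :=
    fun f k => (Equiv.subRight k).sum_comp f
  have hsum : ∑ t, A t + ∑ t, B t = ∑ t, (C t - A (t - 1)) := by
    have := Finset.sum_congr (rfl : (Finset.univ : Finset (ZMod (2 * h + 1))) = _) (fun t _ => hr t)
    simp only [Finset.sum_sub_distrib, Finset.sum_add_distrib, ← Finset.mul_sum, shift] at this ⊢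
    linarith
  have hpar : ∀ t, (C t - A (t - 1)) % 2 = (C (t - 2) - A (t - 2 - 1)) % 2 := by
    intro t
    have := hr t
    have e2 : t - 2 - 1 = t - 3 := by ring
    rw [e2]
    omega
  have hpar2 : ∀ j : ℕ, ∀ t, (C t - A (t - 1)) % 2 = (C (t - 2 * j) - A (t - 2 * j - 1)) % 2 := by
    intro j
    induction j with
    | zero => intro t; simp
    | succ j ih =>
      intro t
      rw [ih t, hpar]
      have : t - 2 * (j : ZMod (2 * h + 1)) - 2 = t - 2 * ((j + 1 : ℕ) : ZMod (2 * h + 1)) := by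
        push_cast; ring
      rw [this]
  have hpar3 : ∀ t, (C t - A (t - 1)) % 2 = (C 0 - A (0 - 1)) % 2 := by
    intro t
    have := hpar2 (((h : ZMod (2 * h + 1)) + 1) * t).val t
    rw [ZMod.natCast_val, ZMod.cast_id', id, ← mul_assoc, rt_two, one_mul, sub_self] at this
    exact this
  have hE : ∀ t, (C t - A (t - 1)) % 2 = 1 := by
    by_contra hcon
    push Not at hcon
    obtain ⟨t0, ht0⟩ := hcon
    have h0 : ∀ t, (2 : ℤ) ∣ C t - A (t - 1) := by
      intro t
      have := hpar3 t
      have := hpar3 t0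
      omega
    have : (2 : ℤ) ∣ ∑ t, (C t - A (t - 1)) := Finset.dvd_sum fun t _ => h0 t
    rw [hsum] at hodd
    rw [Int.odd_iff] at hodd
    omega
  let e : ZMod (2 * h + 1) → ℤ := fun t => (C t - A (t - 1) - 1) / 2
  have he : ∀ t, C t - A (t - 1) = 2 * e t + 1 := by
    intro t
    have := hE t
    simp only [e]
    omega
  have := rt_cyc (2 * h + 1) e (fun t => C t - 1 - e t) ?_ ?_ ?_
  · rw [hsum]
    simp only [he, Finset.sum_add_distrib, ← Finset.mul_sum]
    simp
    exact this
  · intro t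
    have := hC t
    omega
  · intro t
    have := he t
    have := hA (t - 1)
    omega
  · intro t
    have x1 := he t
    have x2 := he (t - 1)
    have x3 := he (t - 2)
    have e1 : t - 1 - 1 = t - 2 := by ring
    have e2 : t - 2 - 1 = t - 3 := by ring
    rw [e1] at x2
    rw [e2] at x3
    have := hr t
    have := hB t
    omega

theorem rt_bij (n h : ℕ) (hn : n = 2 * h + 1) (t : ZMod n) :
    Function.Bijective (fun j : ZMod n => t - 2 * j) := by
  subst hn
  refine Finite.injective_iff_bijective.mp ?_
  intro i j hij
  have h1 : 2 * i = 2 * j := by simpa using hij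
  have h2 := rt_two h
  linear_combination (h + 1 : ZMod (2 * h + 1)) * h1 - (i - j) * h2

theorem rt_carry (n h : ℕ) [NeZero n] (hn : n = 2 * h + 1) (pw : ZMod n → ZMod (3 ^ n - 1))
    (pa : ∀ s t, pw (s + t) = pw s * pw t) (p3 : pw 2 = 3) (w : ZMod n → ℕ)
    (hw : ∃ t, w t ≠ 0) (hz : ∑ t, (w t : ZMod (3 ^ n - 1)) * pw t = 0) (hp0 : pw 0 = 1) :
    ∃ C : ZMod n → ℤ, (∀ t, 1 ≤ C t) ∧ ∀ t, 3 * C t - C (t - 2) = w t := by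
  have hN : 1 < 3 ^ n := Nat.one_lt_pow (by omega) (by norm_num)
  let Z : ZMod n → ℕ := fun t => ∑ j ∈ Finset.range n, w (t - 2 * j) * 3 ^ (n - 1 - j)
  have p3k : ∀ k : ℕ, pw (2 * k) = 3 ^ k := by
    intro k
    induction k with
    | zero => simpa using hp0
    | succ k ih => push_cast; rw [mul_add, pa, ih, mul_one, p3, pow_succ]
  have hdvd : ∀ t, (3 ^ n - 1) ∣ Z t := by
    intro t
    rw [← ZMod.natCast_eq_zero_iff]
    have : ((Z t : ℕ) : ZMod (3 ^ n - 1)) =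
        ∑ j ∈ Finset.range n, (w (t - 2 * j) : ZMod (3 ^ n - 1)) * pw (t - 2 * j) * pw (-2 - t) := by
      simp only [Z]
      push_cast
      refine Finset.sum_congr rfl fun j hj => ?_
      rw [mul_assoc, ← pa, ← p3k]
      congr 2
      have hj' : j + 1 ≤ n := Finset.mem_range.mp hj
      rw [show n - 1 - j = n - (j + 1) by omega, Nat.cast_sub hj', ZMod.natCast_self]
      push_cast; ring
    rw [this, ← Finset.sum_mul]
    have e2 : ∑ j ∈ Finset.range n, (w (t - 2 * j) : ZMod (3 ^ n - 1)) * pw (t - 2 * j)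
        = ∑ j : ZMod n, (w (t - 2 * j) : ZMod (3 ^ n - 1)) * pw (t - 2 * j) := by
      refine Finset.sum_nbij' (fun j => (j : ZMod n)) (fun j => j.val) ?_ ?_ ?_ ?_ ?_
      · intros; simp
      · intro j _; simpa using ZMod.val_lt j
      · intro j hj; exact ZMod.val_cast_of_lt (Finset.mem_range.mp hj)
      · intro j _; simp
      · intros; rfl
    rw [e2, (rt_bij n h hn t).sum_comp (fun s => (w s : ZMod (3 ^ n - 1)) * pw s), hz, zero_mul]
  have hpos : ∀ t, 0 < Z t := by
    intro t
    obtain ⟨s, hs⟩ := hw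
    obtain ⟨j, hj⟩ := (rt_bij n h hn t).2 s
    refine Finset.sum_pos' (fun _ _ => Nat.zero_le _) ⟨j.val, Finset.mem_range.mpr (ZMod.val_lt j), ?_⟩
    simp only [ZMod.natCast_val, ZMod.cast_id', id]
    simp only at hj
    rw [hj]
    exact Nat.mul_pos (Nat.pos_of_ne_zero hs) (by positivity)
  have hrel : ∀ t, 3 * (Z t : ℤ) - Z (t - 2) = (3 ^ n - 1) * w t := by
    intro t
    let g : ℕ → ℤ := fun j => w (t - 2 * j) * 3 ^ (n - j)
    have e1 : 3 * (Z t : ℤ) = ∑ j ∈ Finset.range n, g j := by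
      simp only [Z, g]
      push_cast
      rw [Finset.mul_sum]
      refine Finset.sum_congr rfl fun j hj => ?_
      have hj' : j + 1 ≤ n := Finset.mem_range.mp hj
      rw [show n - j = (n - 1 - j) + 1 by omega, pow_succ]; ring
    have e2 : (Z (t - 2) : ℤ) = ∑ j ∈ Finset.range n, g (j + 1) := by
      simp only [Z, g]
      push_cast
      refine Finset.sum_congr rfl fun j hj => ?_
      rw [show n - (j + 1) = (n - 1 - j) by omega]
      congr 3
      ring_nf
    rw [e1, e2, ← Finset.sum_sub_distrib, Finset.sum_range_sub']
    simp only [g, ZMod.natCast_self]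
    simp
    ring
  choose C hC using hdvd
  have hNz : ((3 ^ n - 1 : ℕ) : ℤ) = 3 ^ n - 1 := by
    rw [Nat.cast_sub hN.le]; push_cast; rfl
  have hNpos : (0 : ℤ) < 3 ^ n - 1 := by
    rw [← hNz]; exact_mod_cast Nat.sub_pos_of_lt hN
  refine ⟨fun t => C t, fun t => ?_, fun t => ?_⟩
  · have := hpos t
    rw [hC] at this
    have h1 : 0 < C t := Nat.pos_of_ne_zero (by rintro h0; simp [h0] at this)
    show (1 : ℤ) ≤ (C t : ℤ)
    exact_mod_cast h1
  · have := hrel t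
    rw [hC, hC] at this
    push_cast [hNz] at this
    apply mul_left_cancel₀ hNpos.ne'
    linear_combination this


theorem rt_pw (n h : ℕ) [NeZero n] (hn : n = 2 * h + 1) :
    ∃ pw : ZMod n → ZMod (3 ^ n - 1), (∀ s t, pw (s + t) = pw s * pw t) ∧ pw 0 = 1 ∧ pw 2 = 3 ∧
      pw 1 = ((3 ^ (h + 1) : ℕ) : ZMod (3 ^ n - 1)) := by
  have h3 : (3 : ZMod (3 ^ n - 1)) ^ n = 1 := by
    have h1 : ((3 ^ n - 1 : ℕ) : ZMod (3 ^ n - 1)) = 0 := ZMod.natCast_self _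
    rw [Nat.cast_sub (Nat.one_le_pow _ _ (by norm_num))] at h1
    push_cast at h1
    exact sub_eq_zero.mp h1
  set α : ZMod (3 ^ n - 1) := 3 ^ (h + 1) with hα
  have hαn : α ^ n = 1 := by rw [hα, ← pow_mul, mul_comm, pow_mul, h3, one_pow]
  have hα2 : α ^ 2 = 3 := by
    rw [hα, ← pow_mul, show (h + 1) * 2 = n + 1 by omega, pow_succ, h3, one_mul]
  have hmod : ∀ k : ℕ, α ^ (k % n) = α ^ k := by
    intro k
    conv_rhs => rw [← Nat.mod_add_div k n, pow_add, pow_mul, hαn, one_pow, mul_one]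
  refine ⟨fun t => α ^ t.val, ?_, ?_, ?_, ?_⟩
  · intro s t
    simp only [ZMod.val_add, hmod, pow_add]
  · simp
  · rw [← hα2, ← hmod 2, ← ZMod.val_natCast]; rfl
  · have : α ^ (1 : ZMod n).val = α ^ 1 := by
      rw [← hmod 1, ← ZMod.val_natCast, Nat.cast_one]
    simp only [this]
    rw [hα]; push_cast; ring

theorem rt_rep (n : ℕ) [NeZero n] (pw : ZMod n → ZMod (3 ^ n - 1))
    (pa : ∀ s t, pw (s + t) = pw s * pw t) (p3 : pw 2 = 3) (m : ℕ) : ∀ u : ZMod n,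
    ∃ A : ZMod n → ℕ, ∑ t, A t = (Nat.digits 3 m).sum ∧
      pw u * (m : ZMod (3 ^ n - 1)) = ∑ t, (A t : ZMod (3 ^ n - 1)) * pw t := by
  induction m using Nat.strong_induction_on with
  | _ m ih =>
    intro u
    rcases Nat.eq_zero_or_pos m with rfl | hm
    · exact ⟨0, by simp, by simp⟩
    · obtain ⟨A, hA1, hA2⟩ := ih (m / 3) (Nat.div_lt_self hm (by norm_num)) (u + 2)
      refine ⟨fun t => (if t = u then m % 3 else 0) + A t, ?_, ?_⟩
      · rw [Finset.sum_add_distrib, hA1, Nat.digits_def' (by norm_num) hm]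
        simp
      · push_cast
        simp only [add_mul, Finset.sum_add_distrib]
        rw [← hA2, pa, p3]
        have : (m : ZMod (3 ^ n - 1)) = ((m % 3 : ℕ) : ZMod (3 ^ n - 1)) + 3 * ((m / 3 : ℕ) : ZMod (3 ^ n - 1)) := by
          conv_lhs => rw [← Nat.mod_add_div m 3]
          push_cast; rfl
        rw [this]
        simp [ite_mul]
        ring

/-- weights of the three monomials -/
def rtEps (h : ℕ) : Fin 3 → ℕ := ![4 * 3 ^ (h + 1) + 6, 2 * 3 ^ (h + 1), 2]

theorem rt_digits (n h : ℕ) [NeZero n] (hn : n = 2 * h + 1) (m : Fin 3 × Fin n → ℕ)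
    (hne : ∃ i, m i ≠ 0) (hodd : Odd (∑ i, (Nat.digits 3 (m i)).sum))
    (hd : (3 ^ n - 1) ∣ ∑ i, rtEps h i.1 * 3 ^ (i.2 : ℕ) * m i) :
    n ≤ ∑ i, (Nat.digits 3 (m i)).sum := by
  classical
  obtain ⟨pw, pa, p0, p3, p1⟩ := rt_pw n h hn
  have p3k : ∀ k : ℕ, pw (2 * k) = 3 ^ k := by
    intro k
    induction k with
    | zero => simpa using p0
    | succ k ih => push_cast; rw [mul_add, pa, ih, mul_one, p3, pow_succ]
  let sh : Fin 3 → ZMod n := ![0, 1, 0]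
  have hrep := fun i : Fin 3 × Fin n => rt_rep n pw pa p3 (m i) (sh i.1 + 2 * ((i.2 : ℕ) : ZMod n))
  choose R hR1 hR2 using hrep
  let A : ZMod n → ℕ := fun t => ∑ k, R (0, k) t
  let B : ZMod n → ℕ := fun t => ∑ k, R (1, k) t + ∑ k, R (2, k) t
  have hsum : ∑ i, (Nat.digits 3 (m i)).sum = ∑ t, A t + ∑ t, B t := by
    simp only [← hR1, A, B]
    rw [Fintype.sum_prod_type, Fin.sum_univ_three, Finset.sum_add_distrib]
    simp only [Finset.sum_comm (s := (Finset.univ : Finset (Fin n)))]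
    ring
  let w : ZMod n → ℕ := fun t => A (t - 1) + 2 * A (t - 2) + A (t - 3) + 2 * B t
  have hzA : ∑ t, (A t : ZMod (3 ^ n - 1)) * pw t = ∑ k : Fin n, ((3 ^ (k : ℕ) * m (0, k) : ℕ) : ZMod (3 ^ n - 1)) := by
    simp only [A]
    push_cast
    simp only [Finset.sum_mul]
    rw [Finset.sum_comm]
    refine Finset.sum_congr rfl fun k _ => ?_
    rw [← hR2, ← p3k]
    simp [sh]
  have hzB : ∑ t, (B t : ZMod (3 ^ n - 1)) * pw t =
      ∑ k : Fin n, ((3 ^ (h + 1) * 3 ^ (k : ℕ) * m (1, k) : ℕ) : ZMod (3 ^ n - 1)) +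
      ∑ k : Fin n, ((3 ^ (k : ℕ) * m (2, k) : ℕ) : ZMod (3 ^ n - 1)) := by
    simp only [B]
    push_cast
    simp only [add_mul, Finset.sum_add_distrib, Finset.sum_mul]
    congr 1
    · rw [Finset.sum_comm]
      refine Finset.sum_congr rfl fun k _ => ?_
      rw [← hR2, ← p3k]
      have e1 : sh (1, k).1 = 1 := rfl
      rw [e1, pa, p1, p3k, p3k]
      push_cast
      ring
    · rw [Finset.sum_comm]
      refine Finset.sum_congr rfl fun k _ => ?_
      rw [← hR2, ← p3k]
      simp [sh]
  have hshift : ∀ k : ZMod n, ∑ t, (A (t - k) : ZMod (3 ^ n - 1)) * pw t =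
      pw k * ∑ t, (A t : ZMod (3 ^ n - 1)) * pw t := by
    intro k
    rw [← Equiv.sum_comp (Equiv.addRight k) (fun t => (A (t - k) : ZMod (3 ^ n - 1)) * pw t), Finset.mul_sum]
    refine Finset.sum_congr rfl fun t _ => ?_
    simp [pa]; ring
  have p3' : pw 3 = 3 * ((3 ^ (h + 1) : ℕ) : ZMod (3 ^ n - 1)) := by
    rw [← p1, ← p3, ← pa]; norm_num
  have hz : ∑ t, (w t : ZMod (3 ^ n - 1)) * pw t = 0 := by
    have hd' := (ZMod.natCast_eq_zero_iff _ _).mpr hd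
    rw [← hd']
    simp only [w]
    push_cast
    simp only [add_mul, Finset.sum_add_distrib, mul_assoc, ← Finset.mul_sum]
    rw [hshift, hshift, hshift, hzA, hzB, p1, p3, p3', Fintype.sum_prod_type, Fin.sum_univ_three]
    simp only [rtEps]
    simp [Finset.mul_sum, mul_add, ← Finset.sum_add_distrib]
    refine Finset.sum_congr rfl fun k _ => ?_
    ring
  have hwne : ∃ t, w t ≠ 0 := by
    by_contra hcon
    push Not at hcon
    have hA0 : ∀ t, A t = 0 := by
      intro t
      have := hcon (t + 1)
      simp only [w, add_sub_cancel_right] at this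
      omega
    have hB0 : ∀ t, B t = 0 := by
      intro t
      have := hcon t
      simp only [w] at this
      omega
    rw [hsum] at hodd
    simp [hA0, hB0] at hodd
  obtain ⟨C, hC1, hC2⟩ := rt_carry n h hn pw pa p3 w hwne hz p0
  subst hn
  have := rt_weight h (fun t => A t) (fun t => B t) C (by simp) (by simp) hC1 ?_ ?_
  · rw [hsum]
    exact_mod_cast this
  · intro t
    rw [hC2]
    simp [w]
  · rw [hsum] at hodd
    exact_mod_cast hodd

theorem rt_val_prod {ι : Type*} (s : Finset ι) (m : ι → ℕ) [Fact (Nat.Prime 3)] :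
    padicValNat 3 (∏ i ∈ s, (m i).factorial) = ∑ i ∈ s, padicValNat 3 (m i).factorial := by
  classical
  induction s using Finset.induction_on with
  | empty => simp
  | insert i s hi ih =>
    rw [Finset.prod_insert hi, Finset.sum_insert hi, padicValNat.mul (Nat.factorial_ne_zero _)
      (Finset.prod_ne_zero_iff.mpr fun i _ => Nat.factorial_ne_zero _), ih]

theorem rt_multinomial (n h : ℕ) [NeZero n] (hn : n = 2 * h + 1) (m : Fin 3 × Fin n → ℕ)
    (hm : ∑ i, m i = 3 ^ h)
    (hd : (3 ^ n - 1) ∣ ∑ i, rtEps h i.1 * 3 ^ (i.2 : ℕ) * m i) :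
    3 ^ h ∣ Nat.multinomial Finset.univ m := by
  have : Fact (Nat.Prime 3) := ⟨Nat.prime_three⟩
  have hspec := Nat.multinomial_spec Finset.univ m
  rw [hm] at hspec
  have hMpos : Nat.multinomial Finset.univ m ≠ 0 := (Nat.multinomial_pos _ _).ne'
  have hPne : ∏ i, (m i).factorial ≠ 0 := Finset.prod_ne_zero_iff.mpr fun i _ => Nat.factorial_ne_zero _
  have hv := congrArg (padicValNat 3) hspec
  rw [padicValNat.mul hPne hMpos, rt_val_prod] at hv
  have hleg : ∀ k : ℕ, 2 * padicValNat 3 k.factorial + (Nat.digits 3 k).sum = k := by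
    intro k
    have := sub_one_mul_padicValNat_factorial (p := 3) k
    have h2 := Nat.digit_sum_le 3 k
    omega
  have h1 := hleg (3 ^ h)
  have hds : (Nat.digits 3 (3 ^ h)).sum = 1 := by
    have := Nat.digits_base_pow_mul (b := 3) (k := h) (m := 1) (by norm_num) (by norm_num)
    rw [mul_one] at this
    rw [this]; simp
  have h2 : 2 * ∑ i, padicValNat 3 (m i).factorial + ∑ i, (Nat.digits 3 (m i)).sum = 3 ^ h := by
    rw [Finset.mul_sum, ← Finset.sum_add_distrib, ← hm]
    exact Finset.sum_congr rfl fun i _ => hleg _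
  have h3 : ∑ i, (Nat.digits 3 (m i)).sum = 2 * padicValNat 3 (Nat.multinomial Finset.univ m) + 1 := by
    omega
  have hne : ∃ i, m i ≠ 0 := by
    by_contra hcon
    push Not at hcon
    simp [hcon] at hm
    exact absurd hm.symm (by positivity)
  have := rt_digits n h hn m hne ⟨_, h3⟩ hd
  rw [padicValNat_dvd_iff_le hMpos]
  omega


theorem rt_transfer {F : Type*} [Field F] [CharP F 3] (j : ℕ) : ∀ (c : ℤ),
    ((3 : WittVector 3 F) ^ j ∣ (c : WittVector 3 F)) → (3 : ℤ) ^ j ∣ c := by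
  have : Fact (Nat.Prime 3) := ⟨Nat.prime_three⟩
  induction j with
  | zero => intro c _; simp
  | succ j ih =>
    intro c hc
    have h3 : ((3 : ℕ) : WittVector 3 F) ≠ 0 := WittVector.p_nonzero 3 F
    have h3' : (3 : WittVector 3 F) ≠ 0 := by exact_mod_cast h3
    have hF : (c : F) = 0 := by
      obtain ⟨w, hw⟩ := hc
      have := congrArg (WittVector.constantCoeff (p := 3) (R := F)) hw
      have h30 : (3 : F) = 0 := CharP.cast_eq_zero F 3
      rw [map_intCast, map_mul, map_pow, map_ofNat] at this
      rw [this, h30]; ring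
    rw [CharP.intCast_eq_zero_iff F 3] at hF
    obtain ⟨d, rfl⟩ := hF
    have : (3 : ℤ) ^ j ∣ d := by
      apply ih
      push_cast at hc
      rw [pow_succ', mul_dvd_mul_iff_left h3'] at hc
      exact hc
    rw [pow_succ']
    exact mul_dvd_mul_left _ this

theorem rt_powsum {F : Type*} [Field F] [Fintype F] [CharP F 3] [Fact (Nat.Prime 3)] (E : ℕ)
    (hE : ¬ (Fintype.card F - 1) ∣ E) :
    ∑ x : F, (WittVector.teichmuller 3 x) ^ E = 0 := by
  classical
  obtain ⟨g, hg⟩ := IsCyclic.exists_generator (α := Fˣ)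
  have hord : orderOf g = Fintype.card F - 1 := by
    rw [orderOf_eq_card_of_forall_mem_zpowers hg, Nat.card_eq_fintype_card, Fintype.card_units]
  have h1 : ∑ x : F, (WittVector.teichmuller 3 x) ^ E
      = ∑ x : F, (WittVector.teichmuller 3 ((g : F) * x)) ^ E :=
    (Fintype.sum_equiv (Equiv.mulLeft₀ (g : F) g.ne_zero) _ _ (fun x => rfl)).symm
  simp only [map_mul, mul_pow] at h1
  rw [← Finset.mul_sum] at h1
  have h2 : (WittVector.teichmuller 3 (g : F)) ^ E ≠ 1 := by
    intro h
    apply hE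
    rw [← hord]
    apply orderOf_dvd_of_pow_eq_one
    have := congrArg (WittVector.constantCoeff (p := 3) (R := F)) h
    rw [map_pow, map_one] at this
    have h5 : WittVector.constantCoeff (WittVector.teichmuller 3 (g : F)) = (g : F) :=
      WittVector.teichmuller_coeff_zero 3 (g : F)
    rw [h5] at this
    exact Units.ext (by simpa using this)
  have h3 : (1 - (WittVector.teichmuller 3 (g : F)) ^ E)
      * ∑ x : F, (WittVector.teichmuller 3 x) ^ E = 0 := by
    linear_combination h1
  rcases mul_eq_zero.mp h3 with h4 | h4
  · exact absurd (sub_eq_zero.mp h4).symm h2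
  · exact h4

theorem rt_div {F : Type*} [Field F] [Fintype F] [CharP F 3] [Algebra (ZMod 3) F] (h : ℕ)
    (hcard : Fintype.card F = 3 ^ (2 * h + 1)) (co : Fin 3 → F) :
    (3 : ℤ) ^ h ∣ ∑ x : F, (Algebra.trace (ZMod 3) F (∑ i, co i * x ^ rtEps h i)).valMinAbs := by
  classical
  have : Fact (Nat.Prime 3) := ⟨Nat.prime_three⟩
  have : PerfectRing F 3 := inferInstance
  set n := 2 * h + 1 with hn
  have : NeZero n := ⟨by omega⟩
  let T := WittVector.teichmuller 3 (R := F)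
  have hT0 : ∀ x, WittVector.constantCoeff (T x) = x := WittVector.teichmuller_coeff_zero 3
  let C : Fin 3 × Fin n → WittVector 3 F := fun i => T (co i.1) ^ (3 ^ (i.2 : ℕ))
  let ee : Fin 3 × Fin n → ℕ := fun i => rtEps h i.1 * 3 ^ (i.2 : ℕ)
  let U : F → WittVector 3 F := fun x => ∑ i, C i * T x ^ ee i
  let τ : F → ℤ := fun x => (Algebra.trace (ZMod 3) F (∑ i, co i * x ^ rtEps h i)).valMinAbs
  have hfr : Module.finrank (ZMod 3) F = n := by
    have := Module.card_eq_pow_finrank (K := ZMod 3) (V := F)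
    rw [hcard, ZMod.card] at this
    exact (Nat.pow_right_injective (le_refl 2 |>.trans (by norm_num)) this).symm
  have h1 : ∀ x, (3 : WittVector 3 F) ∣ (τ x : WittVector 3 F) - U x := by
    intro x
    have h0 : ((τ x : WittVector 3 F) - U x).coeff 0 = 0 := by
      change WittVector.constantCoeff ((τ x : WittVector 3 F) - U x) = 0
      rw [map_sub, map_intCast, sub_eq_zero]
      have e1 : ((τ x : ℤ) : F) = algebraMap (ZMod 3) F (Algebra.trace (ZMod 3) F (∑ i, co i * x ^ rtEps h i)) := by
        simp only [τ]
        generalize (Algebra.trace (ZMod 3) F (∑ i, co i * x ^ rtEps h i)) = r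
        conv_rhs => rw [← ZMod.coe_valMinAbs r]
        rw [map_intCast]
      rw [e1, FiniteField.algebraMap_trace_eq_sum_pow, hfr, Nat.card_zmod]
      simp only [U, C, ee, map_sum, map_mul, map_pow, hT0]
      rw [Fintype.sum_prod_type_right, Finset.sum_range]
      apply Finset.sum_congr rfl
      intro k _
      rw [sum_pow_char_pow]
      apply Finset.sum_congr rfl
      intro i _
      rw [mul_pow, ← pow_mul]
    have := (WittVector.mem_span_p_iff_coeff_zero_eq_zero (p := 3) _).mpr h0
    rw [Ideal.mem_span_singleton] at this
    exact_mod_cast this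
  have h2 : ∀ x, (3 : WittVector 3 F) ^ h ∣ (τ x : WittVector 3 F) - U x ^ (3 ^ h) := by
    intro x
    have h3 := dvd_sub_pow_of_dvd_sub (p := 3) (by exact_mod_cast h1 x) h
    have h4 : τ x ^ (3 ^ h) = τ x := by
      have : ∀ r : ZMod 3, r.valMinAbs = 0 ∨ r.valMinAbs = 1 ∨ r.valMinAbs = -1 := by decide
      have hodd : Odd (3 ^ h) := Odd.pow (by decide)
      rcases this (Algebra.trace (ZMod 3) F (∑ i, co i * x ^ rtEps h i)) with h | h | h <;>
        simp only [τ, h]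
      · exact zero_pow (by positivity)
      · exact one_pow _
      · exact hodd.neg_one_pow
    have h5 : ((τ x : WittVector 3 F)) ^ (3 ^ h) = τ x := by exact_mod_cast congrArg (Int.cast (R := WittVector 3 F)) h4
    rw [h5] at h3
    refine (pow_dvd_pow _ (Nat.le_succ h)).trans ?_
    exact_mod_cast h3
  have h6 : (3 : WittVector 3 F) ^ h ∣ ∑ x, U x ^ (3 ^ h) := by
    simp only [U, Finset.sum_pow_eq_sum_piAntidiag]
    rw [Finset.sum_comm]
    apply Finset.dvd_sum
    intro m hm
    rw [Finset.mem_piAntidiag] at hm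
    have hprod : ∀ x, ∏ i, (C i * T x ^ ee i) ^ m i = (∏ i, C i ^ m i) * T x ^ (∑ i, ee i * m i) := by
      intro x
      rw [← Finset.prod_pow_eq_pow_sum, ← Finset.prod_mul_distrib]
      apply Finset.prod_congr rfl
      intro i _
      rw [mul_pow, pow_mul (T x) (ee i)]
    simp only [hprod]
    rw [← Finset.mul_sum, ← Finset.mul_sum]
    by_cases hd : (3 ^ n - 1) ∣ ∑ i, ee i * m i
    · have := rt_multinomial n h hn m hm.1 hd
      apply Dvd.dvd.mul_right
      obtain ⟨k, hk⟩ := this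
      rw [hk]
      push_cast
      exact Dvd.intro _ rfl
    · have : ∑ x, T x ^ (∑ i, ee i * m i) = 0 := rt_powsum _ (by rw [hcard]; exact hd)
      rw [this]; simp
  apply rt_transfer (F := F)
  change (3 : WittVector 3 F) ^ h ∣ ((∑ x, τ x : ℤ) : WittVector 3 F)
  have h7 : ((∑ x, τ x : ℤ) : WittVector 3 F) = ∑ x, ((τ x : WittVector 3 F) - U x ^ (3 ^ h)) + ∑ x, U x ^ (3 ^ h) := by
    rw [← Finset.sum_add_distrib]; push_cast
    apply Finset.sum_congr rfl; intro x _; ring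
  rw [h7]
  exact dvd_add (Finset.dvd_sum fun x _ => h2 x) h6


/-- Twice the real part of the cubic character. -/
def rtE (r : ZMod 3) : ℤ := if r = 0 then 2 else -1

theorem rt_sumE {F : Type*} [Field F] [Fintype F] [Algebra (ZMod 3) F] (g : F) (hg : g ≠ 0) :
    ∑ b : F, rtE (Algebra.trace (ZMod 3) F (b * g)) = 0 := by
  obtain ⟨y, hy⟩ := Algebra.trace_surjective (ZMod 3) F 1
  have key : ∀ k : ZMod 3, ∑ b : F, rtE (Algebra.trace (ZMod 3) F (b * g)) =
      ∑ b : F, rtE (Algebra.trace (ZMod 3) F (b * g) + k) := by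
    intro k
    obtain ⟨y, hy⟩ := Algebra.trace_surjective (ZMod 3) F k
    refine (Fintype.sum_equiv (Equiv.addRight (y / g)) _ _ (fun x => ?_)).symm
    rw [Equiv.coe_addRight, add_mul, div_mul_cancel₀ _ hg, map_add, hy]
  have h3 : ∀ r : ZMod 3, rtE r + rtE (r + 1) + rtE (r + 2) = 0 := by decide
  have : 3 * ∑ b : F, rtE (Algebra.trace (ZMod 3) F (b * g)) = 0 := by
    calc _ = ∑ b : F, rtE (Algebra.trace (ZMod 3) F (b * g))
          + ∑ b : F, rtE (Algebra.trace (ZMod 3) F (b * g) + 1)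
          + ∑ b : F, rtE (Algebra.trace (ZMod 3) F (b * g) + 2) := by
            rw [← key 1, ← key 2]; ring
      _ = 0 := by
        rw [← Finset.sum_add_distrib, ← Finset.sum_add_distrib]
        exact Finset.sum_eq_zero fun b _ => h3 _
  linarith

theorem rt_sumE' {F : Type*} [Field F] [Fintype F] [DecidableEq F] [Algebra (ZMod 3) F] (g : F) :
    ∑ b : F, rtE (Algebra.trace (ZMod 3) F (b * g)) = if g = 0 then 2 * (Fintype.card F : ℤ) else 0 := by
  split_ifs with h
  · subst h
    simp [rtE, mul_comm]
  · exact rt_sumE g h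

theorem rt_comb {F : Type*} [Field F] [Fintype F] [DecidableEq F] [Algebra (ZMod 3) F] (h : ℕ)
    (hcard : Fintype.card F = 3 ^ (2 * h + 1)) (D : Finset F) (h0 : 0 ∉ D)
    (hdisj : ∀ x ∈ D, -x ∉ D) (hcov : ∀ x, x ≠ 0 → x ∈ D ∨ -x ∈ D)
    (hdiv : ∀ b : F, (3 : ℤ) ^ h ∣ ∑ d ∈ D, (Algebra.trace (ZMod 3) F (b * d)).valMinAbs) :
    (2 * (D.card : ℤ) = 3 ^ (2 * h + 1) - 1) ∧
    ∀ g : F, g ≠ 0 → 4 * (((D ×ˢ D).filter (fun p => p.1 - p.2 = g)).card : ℤ) = 3 ^ (2 * h + 1) - 3 := by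
  have hq : (Fintype.card F : ℤ) = 3 ^ (2 * h + 1) := by exact_mod_cast hcard
  set q : ℤ := 3 ^ (2 * h + 1) with hqdef
  have hqpos : 0 < q := by positivity
  set tr := Algebra.trace (ZMod 3) F with htr
  -- decomposition
  have hdec : ∀ φ : F → ℤ, ∑ x, φ x = φ 0 + ∑ d ∈ D, φ d + ∑ d ∈ D, φ (-d) := by
    intro φ
    have hu : (Finset.univ : Finset F) = insert 0 (D ∪ D.image (fun x => -x)) := by
      ext x
      simp only [Finset.mem_univ, Finset.mem_insert, Finset.mem_union, Finset.mem_image, true_iff]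
      by_cases hx : x = 0
      · left; exact hx
      · right
        rcases hcov x hx with h1 | h1
        · left; exact h1
        · right; exact ⟨-x, h1, neg_neg x⟩
    have hd : Disjoint D (D.image (fun x => -x)) := by
      rw [Finset.disjoint_left]
      intro x hx hx'
      obtain ⟨y, hy, rfl⟩ := Finset.mem_image.mp hx'
      exact hdisj y hy hx
    rw [hu, Finset.sum_insert, Finset.sum_union hd, Finset.sum_image]
    · ring
    · intro x _ y _ hxy; exact neg_injective hxy
    · simp only [Finset.mem_union, Finset.mem_image, not_or]
      refine ⟨h0, ?_⟩
      rintro ⟨y, hy, hy'⟩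
      rw [neg_eq_zero] at hy'
      exact h0 (hy' ▸ hy)
  have hDc : 2 * (D.card : ℤ) = q - 1 := by
    have := hdec (fun _ => 1)
    simp only [Finset.sum_const, Finset.card_univ, nsmul_eq_mul, mul_one, hq] at this
    linarith
  refine ⟨hDc, ?_⟩
  have eneg : ∀ r : ZMod 3, rtE (-r) = rtE r := by decide
  have tneg : ∀ r : ZMod 3, (-r).valMinAbs = - r.valMinAbs := by decide
  have eid : ∀ r s : ZMod 3, 2 * rtE (r - s) = rtE r * rtE s + 3 * (r.valMinAbs * s.valMinAbs) := by decide
  have tid : ∀ r s : ZMod 3, 3 * (r.valMinAbs * s.valMinAbs) = rtE (r - s) - rtE (r + s) := by decide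
  have par : ∀ r : ZMod 3, (2 : ℤ) ∣ r.valMinAbs - rtE r := by decide
  have hE : ∀ b : F, b ≠ 0 → ∑ d ∈ D, rtE (tr (b * d)) = -1 := by
    intro b hb
    have h1 := rt_sumE b hb
    simp_rw [mul_comm _ b] at h1
    rw [hdec] at h1
    simp only [mul_neg, map_neg, eneg, mul_zero, map_zero] at h1
    have : rtE 0 = 2 := by decide
    rw [this] at h1
    linarith
  let c : F → ℤ := fun b => ∑ d ∈ D, (tr (b * d)).valMinAbs
  have hc0 : c 0 = 0 := by simp [c]
  have hodd : ∀ b, b ≠ 0 → c b ≠ 0 := by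
    intro b hb hcb
    have : (2 : ℤ) ∣ ∑ d ∈ D, ((tr (b * d)).valMinAbs - rtE (tr (b * d))) :=
      Finset.dvd_sum fun d _ => par _
    rw [Finset.sum_sub_distrib, hE b hb] at this
    change (2 : ℤ) ∣ c b - (-1) at this
    rw [hcb] at this
    norm_num at this
  have hge : ∀ b, b ≠ 0 → q ≤ 3 * c b ^ 2 := by
    intro b hb
    obtain ⟨k, hk⟩ := hdiv b
    change c b = _ at hk
    have hk0 : k ≠ 0 := by
      rintro rfl
      exact hodd b hb (by rw [hk, mul_zero])
    have hk2 : 1 ≤ k ^ 2 := by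
      have : 0 < k ^ 2 := by positivity
      omega
    rw [hk, hqdef, pow_succ, pow_mul']
    have : (0 : ℤ) < (3 ^ h) ^ 2 := by positivity
    nlinarith
  have hpars : 3 * ∑ b, c b ^ 2 = q * (q - 1) := by
    have e1 : ∀ b, 3 * c b ^ 2 = ∑ d ∈ D, ∑ d' ∈ D, (rtE (tr (b * (d - d'))) - rtE (tr (b * (d + d')))) := by
      intro b
      rw [sq, Finset.sum_mul_sum, Finset.mul_sum]
      apply Finset.sum_congr rfl
      intro d _
      rw [Finset.mul_sum]
      apply Finset.sum_congr rfl
      intro d' _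
      rw [tid, mul_sub, mul_add, map_sub, map_add]
    rw [Finset.mul_sum]
    simp_rw [e1]
    rw [Finset.sum_comm]
    have e2 : ∀ d ∈ D, ∑ b, ∑ d' ∈ D, (rtE (tr (b * (d - d'))) - rtE (tr (b * (d + d')))) = 2 * q := by
      intro d hd
      rw [Finset.sum_comm]
      have e3 : ∀ d' ∈ D, ∑ b, (rtE (tr (b * (d - d'))) - rtE (tr (b * (d + d')))) = if d = d' then 2 * q else 0 := by
        intro d' hd'
        rw [Finset.sum_sub_distrib, rt_sumE', rt_sumE', if_neg (c := d + d' = 0), hq]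
        · simp [sub_eq_zero]
        · intro hdd
          apply hdisj d' hd'
          rwa [← eq_neg_of_add_eq_zero_left hdd]
      rw [Finset.sum_congr rfl e3]
      simp [hd]
    rw [Finset.sum_congr rfl e2, Finset.sum_const, nsmul_eq_mul]
    linear_combination q * hDc
  have heq : ∀ b, b ≠ 0 → 3 * c b ^ 2 = q := by
    have e1 : ∑ b ∈ Finset.univ.erase (0 : F), (3 * c b ^ 2 - q) = 0 := by
      have := Finset.add_sum_erase Finset.univ (fun b => 3 * c b ^ 2 - q) (Finset.mem_univ (0 : F))
      have e2 : ∑ b, (3 * c b ^ 2 - q) = - q := by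
        rw [Finset.sum_sub_distrib, ← Finset.mul_sum, hpars]
        simp [hq]; ring
      rw [e2] at this
      simp only [hc0] at this
      linarith
    rw [Finset.sum_eq_zero_iff_of_nonneg] at e1
    · intro b hb
      have := e1 b (Finset.mem_erase.mpr ⟨hb, Finset.mem_univ _⟩)
      linarith
    · intro b hb
      have := hge b (Finset.mem_erase.mp hb).1
      linarith
  let P : F → ℤ := fun b => ∑ d ∈ D, ∑ d' ∈ D, rtE (tr (b * (d - d')))
  have hP0 : P 0 = 2 * (D.card : ℤ) ^ 2 := by
    have : rtE 0 = 2 := by decide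
    simp [P, this]; ring
  have hP : ∀ b, b ≠ 0 → 2 * P b = 1 + q := by
    intro b hb
    have e1 : 2 * P b = (∑ d ∈ D, rtE (tr (b * d))) ^ 2 + 3 * c b ^ 2 := by
      simp only [P, c]
      rw [sq, sq, Finset.sum_mul_sum, Finset.sum_mul_sum, Finset.mul_sum, Finset.mul_sum, ← Finset.sum_add_distrib]
      apply Finset.sum_congr rfl
      intro d _
      rw [Finset.mul_sum, Finset.mul_sum, ← Finset.sum_add_distrib]
      apply Finset.sum_congr rfl
      intro d' _
      rw [mul_sub, map_sub, eid]
    rw [e1, hE b hb, heq b hb]; norm_num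
  intro g hg
  set N : ℤ := (((D ×ˢ D).filter (fun p => p.1 - p.2 = g)).card : ℤ) with hN
  have hR : ∀ b, 2 * ∑ d ∈ D, ∑ d' ∈ D, rtE (tr (b * (d - d' - g))) = rtE (tr (b * g)) * P b := by
    intro b
    have anti : ∑ d ∈ D, ∑ d' ∈ D, (tr (b * (d - d'))).valMinAbs = 0 := by
      have e1 : ∑ d ∈ D, ∑ d' ∈ D, (tr (b * (d - d'))).valMinAbs = - ∑ d ∈ D, ∑ d' ∈ D, (tr (b * (d - d'))).valMinAbs := by
        conv_lhs => rw [Finset.sum_comm]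
        rw [← Finset.sum_neg_distrib]
        apply Finset.sum_congr rfl
        intro d _
        rw [← Finset.sum_neg_distrib]
        apply Finset.sum_congr rfl
        intro d' _
        rw [← tneg, ← map_neg]; congr 2; ring
      linarith
    have e2 : 2 * ∑ d ∈ D, ∑ d' ∈ D, rtE (tr (b * (d - d' - g))) = rtE (tr (b * g)) * P b
        + 3 * (tr (b * g)).valMinAbs * ∑ d ∈ D, ∑ d' ∈ D, (tr (b * (d - d'))).valMinAbs := by
      simp only [P]
      rw [Finset.mul_sum, Finset.mul_sum, Finset.mul_sum, ← Finset.sum_add_distrib]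
      apply Finset.sum_congr rfl
      intro d _
      rw [Finset.mul_sum, Finset.mul_sum, Finset.mul_sum, ← Finset.sum_add_distrib]
      apply Finset.sum_congr rfl
      intro d' _
      rw [mul_sub b (d - d') g, map_sub, eid]
      ring
    rw [e2, anti]; ring
  have hL : ∑ b, ∑ d ∈ D, ∑ d' ∈ D, rtE (tr (b * (d - d' - g))) = 2 * q * N := by
    rw [Finset.sum_comm]
    have e1 : ∀ d ∈ D, ∑ b, ∑ d' ∈ D, rtE (tr (b * (d - d' - g))) = ∑ d' ∈ D, if d - d' = g then 2 * q else 0 := by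
      intro d _
      rw [Finset.sum_comm]
      apply Finset.sum_congr rfl
      intro d' _
      rw [rt_sumE', hq]
      simp [sub_eq_zero]
    rw [Finset.sum_congr rfl e1, ← Finset.sum_product', ← Finset.sum_filter, Finset.sum_const, nsmul_eq_mul, ← hN]
    ring
  have hfin : 2 * (2 * (2 * q * N)) = 2 * (4 * (D.card : ℤ) ^ 2 - (1 + q)) := by
    have hz := rt_sumE g hg
    rw [← Finset.add_sum_erase Finset.univ _ (Finset.mem_univ (0 : F))] at hz
    have e20 : rtE (tr (0 * g)) = 2 := by rw [zero_mul, map_zero]; decide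
    rw [e20] at hz
    rw [← hL, Finset.mul_sum, Finset.sum_congr rfl (fun b _ => hR b),
      ← Finset.add_sum_erase Finset.univ _ (Finset.mem_univ (0 : F)), e20, hP0, mul_add, Finset.mul_sum]
    have e3 : ∀ b ∈ Finset.univ.erase (0 : F), 2 * (rtE (tr (b * g)) * P b) = rtE (tr (b * g)) * (1 + q) := by
      intro b hb
      rw [← hP b (Finset.mem_erase.mp hb).1]; ring
    rw [Finset.sum_congr rfl e3, ← Finset.sum_mul]
    linear_combination (1 + q) * hz
  apply mul_left_cancel₀ hqpos.ne'
  have hD2 : 4 * (D.card : ℤ) ^ 2 = (q - 1) ^ 2 := by rw [← hDc]; ring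
  linarith


theorem rt_perm {F : Type*} [Field F] [CharP F 3] (σ : F →+* F) (hσ : ∀ x, σ (σ x) = x ^ 3) (a : F)
    (ha : a ≠ 0) (x x' : F)
    (hxx : x ^ 3 * σ x ^ 2 + σ a * σ x - a ^ 2 * x = x' ^ 3 * σ x' ^ 2 + σ a * σ x' - a ^ 2 * x') :
    x = x' := by
  have h3 : (3 : F) = 0 := CharP.cast_eq_zero F 3
  have hA : σ a ≠ 0 := (map_ne_zero σ).mpr ha
  let c : F → F := fun x => x ^ 3 * σ x ^ 2 + σ a * σ x - a ^ 2 * x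
  let N : F → F := fun x => -x ^ 4 * σ x ^ 2 + a * x ^ 3 * σ x - σ a * x * σ x - a ^ 2 * x ^ 2
  have hσc : ∀ x, σ (c x) = σ x ^ 3 * x ^ 6 + a ^ 3 * x ^ 3 - σ a ^ 2 * σ x := by
    intro x
    simp only [c, map_sub, map_add, map_mul, map_pow, hσ]
    ring
  have hσN : ∀ x, a ^ 2 * N x + σ (N x) = - c x ^ 2 := by
    intro x
    simp only [N, c, map_sub, map_add, map_mul, map_pow, map_neg, hσ]
    generalize σ x = y
    generalize σ a = A
    linear_combination (-a ^ 2 * x ^ 4 * y ^ 2 + A * x ^ 3 * y ^ 3 - a ^ 2 * A * x * y) * h3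
  have hV : ∀ x, (a ^ 2 * N x + c x ^ 2 - a ^ 3 * σ a) * (a ^ 2 * x + c x) = c x ^ 3 + a ^ 3 * σ (c x) := by
    intro x
    rw [hσc]
    simp only [N, c]
    generalize σ x = y
    generalize σ a = A
    grind
  -- K = 0 case
  have hK : ∀ x, a ^ 2 * N x + c x ^ 2 - a ^ 3 * σ a = 0 → a ^ 2 * x + c x = 0 := by
    intro x hK0
    by_contra hz
    have hm : c x ^ 3 + a ^ 3 * σ (c x) = 0 := by rw [← hV, hK0, zero_mul]
    have e1 : c x ^ 3 * (a ^ 2 * x + c x) = a ^ 6 * σ a ^ 2 := by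
      have hzd : a ^ 2 * x + c x = σ x * (x ^ 3 * σ x + σ a) := by simp only [c]; ring
      have k0 : a ^ 3 * (x ^ 3 * σ x) = a ^ 3 * σ a - (a ^ 2 * x + c x) ^ 2 := by
        have hK1 := hK0
        simp only [N, c] at hK1 ⊢
        linear_combination hK1 + (a ^ 2 * x ^ 4 * σ x ^ 2 + a ^ 2 * σ a * x * σ x) * h3
      have k1 : a ^ 6 * x ^ 3 = (a ^ 2 * x + c x) ^ 3 - c x ^ 3 := by
        linear_combination -(a ^ 4 * x ^ 2 * c x + a ^ 2 * x * c x ^ 2) * h3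
      have k2 : x ^ 3 * (a ^ 2 * x + c x) = x ^ 3 * σ x * (x ^ 3 * σ x + σ a) := by
        rw [hzd]; ring
      have k3 : (a ^ 3 * (x ^ 3 * σ x)) * (a ^ 3 * (x ^ 3 * σ x) + a ^ 3 * σ a) =
          ((a ^ 2 * x + c x) ^ 3 - c x ^ 3) * (a ^ 2 * x + c x) := by
        rw [← k1]; linear_combination -a ^ 6 * k2
      rw [k0] at k3
      generalize a ^ 2 * x + c x = z at *
      linear_combination k3 - (a ^ 6 * σ a ^ 2 - a ^ 3 * σ a * z ^ 2) * h3
    have hm2 : σ (c x) ^ 3 + σ a ^ 3 * c x ^ 3 = 0 := by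
      have := congrArg σ hm
      simpa [hσ] using this
    have hm3 : (σ (c x) + σ a * c x) ^ 3 = 0 := by
      linear_combination hm2 + (σ (c x) ^ 2 * σ a * c x + σ (c x) * σ a ^ 2 * c x ^ 2) * h3
    have hm4 : σ (c x) + σ a * c x = 0 := by simpa using hm3
    have hc0 : c x ≠ 0 := by
      intro h0
      rw [h0] at e1
      have : a ^ 6 * σ a ^ 2 ≠ 0 := by positivity
      exact this (by rw [← e1]; ring)
    have hc2 : c x ^ 2 = a ^ 3 * σ a := by
      apply mul_left_cancel₀ hc0
      linear_combination hm - a ^ 3 * hm4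
    have : a ^ 2 * x = 0 := by
      apply mul_left_cancel₀ (pow_ne_zero 3 hc0)
      linear_combination e1 - (c x ^ 2 + a ^ 3 * σ a) * hc2
    have hx0 : x = 0 := by simpa [ha] using this
    apply hc0
    simp [c, hx0]
  have hc : c x = c x' := hxx
  have hn : σ (N x - N x') = - a ^ 2 * (N x - N x') := by
    rw [map_sub]
    linear_combination hσN x - hσN x' - (c x + c x') * hc
  have hN : N x = N x' := by
    rw [← sub_eq_zero]
    by_contra hne
    set d := N x - N x' with hd
    have h1 : d ^ 3 = σ a ^ 2 * a ^ 2 * d := by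
      rw [← hσ, hn]
      simp only [map_mul, map_neg, map_pow, hn]
      ring
    have h2 : (d - σ a * a) * (d + σ a * a) = 0 := by
      apply mul_left_cancel₀ hne
      linear_combination h1
    have h2ne : (2 : F) ≠ 0 := by
      intro h2
      exact one_ne_zero (α := F) (by linear_combination h3 - h2)
    have h4 : a ^ 2 * d = 0 := by
      rcases mul_eq_zero.mp h2 with h5 | h5
      · have h6 := congrArg σ h5
        simp only [map_sub, map_mul, hσ, hn, map_zero] at h6
        apply mul_left_cancel₀ h2ne
        linear_combination -h6 + a ^ 2 * h5
      · have h6 := congrArg σ h5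
        simp only [map_add, map_mul, hσ, hn, map_zero] at h6
        apply mul_left_cancel₀ h2ne
        linear_combination -h6 + a ^ 2 * h5
    simp [ha, hne] at h4
  have v1 := hV x
  have v2 := hV x'
  have ha2 : a ^ 2 ≠ 0 := pow_ne_zero 2 ha
  by_cases hk : a ^ 2 * N x + c x ^ 2 - a ^ 3 * σ a = 0
  · have k1 := hK x hk
    have k2 := hK x' (by rw [← hN, ← hc]; exact hk)
    apply mul_left_cancel₀ ha2
    linear_combination k1 - k2 - hc
  · rw [← hN, ← hc] at v2
    have : a ^ 2 * x + c x = a ^ 2 * x' + c x := by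
      apply mul_left_cancel₀ hk
      rw [v1, v2]
    apply mul_left_cancel₀ ha2
    linear_combination this

theorem reeTits_skew_hadamard_diffSet {F : Type*} [Field F] [Fintype F] (h : ℕ)
    (hcard : Fintype.card F = 3 ^ (2 * h + 1)) (a : F) (ha : a ≠ 0) :
    let q := 3 ^ (2 * h + 1)
    let α := 3 ^ (h + 1)
    let f : F → F := fun x => x ^ (2 * α + 3) + a ^ α * x ^ α - a ^ 2 * x
    let D : Set F := {y | ∃ x : F, x ≠ 0 ∧ y = f (x ^ 2)}
    IsDiffSet D q ((q - 1) / 2) ((q - 3) / 4) ∧ IsSkewHadamard D := by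
  classical
  intro q α f D
  have hchar : CharP F 3 := charP_of_card_eq_prime_pow hcard
  let : Algebra (ZMod 3) F := ZMod.algebra F 3
  let σ : F →+* F := iterateFrobenius F 3 (h + 1)
  have hσd : ∀ x, σ x = x ^ α := fun x => iterateFrobenius_def 3 (h + 1) x
  have hσ : ∀ x, σ (σ x) = x ^ 3 := by
    intro x
    rw [hσd, hσd, ← pow_mul]
    have e : α * α = 3 ^ (2 * h + 1) * 3 := by simp only [α]; ring
    rw [e, pow_mul, ← hcard, FiniteField.pow_card]
  have hf : ∀ x, f x = x ^ 3 * σ x ^ 2 + σ a * σ x - a ^ 2 * x := by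
    intro x
    simp only [f, hσd]; ring
  have hinj : Function.Injective f := by
    intro x x' hxx
    rw [hf, hf] at hxx
    exact rt_perm σ hσ a ha x x' hxx
  have hsurj : Function.Surjective f := Finite.surjective_of_injective hinj
  have hf0 : f 0 = 0 := by rw [hf]; simp
  have hodd : ∀ x, f (-x) = - f x := by
    intro x; rw [hf, hf, map_neg]; ring
  have hq4 : q % 4 = 3 := by
    simp only [q]
    rw [pow_succ, pow_mul, Nat.mul_mod, Nat.pow_mod]
    norm_num
  have hneg : ¬ IsSquare (-1 : F) := by
    rw [FiniteField.isSquare_neg_one_iff, hcard]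
    simpa using hq4
  have hF2 : ringChar F ≠ 2 := by
    rw [ringChar.eq F 3]; norm_num
  have h2ne : (2 : F) ≠ 0 := Ring.two_ne_zero hF2
  let Df : Finset F := (Finset.univ.erase (0 : F)).image (fun x => f (x ^ 2))
  have hmem : ∀ y, y ∈ Df ↔ y ∈ D := by
    intro y
    simp only [Df, D, Finset.mem_image, Finset.mem_erase, Finset.mem_univ, and_true, Set.mem_ofPred_eq]
    constructor
    · rintro ⟨x, hx, rfl⟩; exact ⟨x, hx, rfl⟩
    · rintro ⟨x, hx, rfl⟩; exact ⟨x, hx, rfl⟩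
  have h0 : (0 : F) ∉ D := by
    rintro ⟨x, hx, hy⟩
    rw [← hf0] at hy
    exact pow_ne_zero 2 hx (hinj hy).symm
  have hdisj : ∀ x ∈ D, -x ∉ D := by
    rintro _ ⟨x, hx, rfl⟩ ⟨z, hz, hzz⟩
    rw [← hodd] at hzz
    have := hinj hzz
    apply hneg
    refine ⟨z / x, ?_⟩
    field_simp
    linear_combination this
  have hcov : ∀ x, x ≠ 0 → x ∈ D ∨ -x ∈ D := by
    intro y hy
    obtain ⟨w, rfl⟩ := hsurj y
    have hw : w ≠ 0 := by rintro rfl; exact hy hf0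
    by_cases hs : IsSquare w
    · obtain ⟨x, rfl⟩ := hs
      left
      refine ⟨x, by rintro rfl; simp at hw, by rw [sq]⟩
    · right
      have h1 : IsSquare (-w) := by
        rw [← quadraticChar_one_iff_isSquare (neg_ne_zero.mpr hw), neg_eq_neg_one_mul, map_mul,
          quadraticChar_neg_one_iff_not_isSquare.mpr hs,
          quadraticChar_neg_one_iff_not_isSquare.mpr hneg]
        norm_num
      obtain ⟨x, hx⟩ := h1
      refine ⟨x, ?_, ?_⟩
      · rintro rfl; apply hw; simpa using hx
      · rw [← hodd, hx, sq]
  have hdiv : ∀ b : F, (3 : ℤ) ^ h ∣ ∑ d ∈ Df, (Algebra.trace (ZMod 3) F (b * d)).valMinAbs := by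
    intro b
    have h1 := rt_div h hcard ![b, b * a ^ α, -(b * a ^ 2)]
    have h2 : ∀ x : F, ∑ i, (![b, b * a ^ α, -(b * a ^ 2)] : Fin 3 → F) i * x ^ rtEps h i = b * f (x ^ 2) := by
      intro x
      simp only [Fin.sum_univ_three, rtEps, f, α]
      simp
      ring
    simp_rw [h2] at h1
    let φ : F → ℤ := fun y => (Algebra.trace (ZMod 3) F (b * y)).valMinAbs
    change (3 : ℤ) ^ h ∣ ∑ x : F, φ (f (x ^ 2)) at h1
    rw [← Finset.add_sum_erase Finset.univ _ (Finset.mem_univ (0 : F))] at h1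
    have hφ : φ (f (0 ^ 2)) = 0 := by simp [φ, hf0]
    rw [hφ, zero_add, Finset.sum_comp φ (fun x => f (x ^ 2))] at h1
    have h3 : ∀ y ∈ Df, ((Finset.univ.erase (0 : F)).filter (fun x => f (x ^ 2) = y)).card • φ y = 2 * φ y := by
      intro y hy
      obtain ⟨x, hx, rfl⟩ := (hmem y).mp hy
      have h4 : (Finset.univ.erase (0 : F)).filter (fun z => f (z ^ 2) = f (x ^ 2)) = {x, -x} := by
        ext z
        simp only [Finset.mem_filter, Finset.mem_erase, Finset.mem_univ, and_true,
          Finset.mem_insert, Finset.mem_singleton]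
        rw [hinj.eq_iff, sq_eq_sq_iff_eq_or_eq_neg]
        constructor
        · exact fun h => h.2
        · rintro (rfl | rfl)
          · exact ⟨hx, Or.inl rfl⟩
          · exact ⟨neg_ne_zero.mpr hx, Or.inr rfl⟩
      rw [h4, Finset.card_pair]
      · simp
      · intro hxx
        apply mul_ne_zero h2ne hx
        linear_combination hxx
    change (3 : ℤ) ^ h ∣ ∑ y ∈ Df, _ at h1
    rw [Finset.sum_congr rfl h3, ← Finset.mul_sum] at h1
    exact (IsCoprime.pow_left (by norm_num : IsCoprime (3 : ℤ) 2)).dvd_of_dvd_mul_left h1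
  obtain ⟨hc1, hc2⟩ := rt_comb h hcard Df (by rw [hmem]; exact h0)
    (by intro x hx; rw [hmem] at hx ⊢; exact hdisj x hx)
    (by intro x hx; rw [hmem, hmem]; exact hcov x hx) hdiv
  refine ⟨⟨?_, ?_, ?_⟩, ?_, h0, ?_⟩
  · rw [Nat.card_eq_fintype_card, hcard]
  · have e : D = (Df : Set F) := by ext y; exact (hmem y).symm
    have e2 : Nat.card D = Df.card := by rw [e]; simp
    rw [e2]
    have : (2 * Df.card : ℤ) = (q : ℤ) - 1 := by rw [hc1]; simp [q]
    omega
  · intro g hg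
    have e : {p : F × F | p.1 ∈ D ∧ p.2 ∈ D ∧ p.1 - p.2 = g}
        = (((Df ×ˢ Df).filter (fun p => p.1 - p.2 = g) : Finset (F × F)) : Set (F × F)) := by
      ext p
      simp [hmem, and_assoc]
    have e2 : Nat.card {p : F × F | p.1 ∈ D ∧ p.2 ∈ D ∧ p.1 - p.2 = g}
        = ((Df ×ˢ Df).filter (fun p => p.1 - p.2 = g)).card := by
      rw [e]; exact (Nat.card_eq_fintype_card (α := _)).trans (Fintype.card_coe _)
    rw [e2]
    have := hc2 g hg
    have : (4 * (((Df ×ˢ Df).filter (fun p => p.1 - p.2 = g)).card : ℤ)) = (q : ℤ) - 3 := by rw [this]; simp [q]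
    omega
  · rw [Set.disjoint_left]
    intro x hx hx'
    exact hdisj x hx hx'
  · ext x
    simp only [Set.mem_union, Set.mem_neg, Set.mem_singleton_iff, Set.mem_univ, iff_true]
    by_cases hx : x = 0
    · right; exact hx
    · left; exact hcov x hx
end

section
/- Let q = 3^m with m = 2h+1 odd, and α = 3^{h+1}. For any β ∈ F_q* and a ∈ F_q*, the character sum S = Σ_{x ∈ F_q*} χ(x) · ξ₃^{Tr(x^{α+2} + (β^{α−1} a^α − β^{2(α−1)} a^{2α}) x)} satisfies S = ±√(−q); equivalently, S² = −q (so S = ± i · 3^h · √3). -/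
theorem rt_noSol_half {F : Type*} [Field F] [CharP F 3] (φ : F →+* F)
    (hφ : ∀ z, φ (φ z) = z ^ 3) (x p : F) (hp : p ≠ 0)
    (h1 : φ x ^ 2 - φ x * x ^ 3 + 1 + φ p - p ^ 2 = 0)
    (h3 : p ^ 2 = (p - φ x - x ^ 3) * (φ x - 1)) : False := by
  have c3 : (3 : F) = 0 := by exact_mod_cast CharP.cast_eq_zero F 3
  have h4 := congrArg φ h3
  simp only [map_mul, map_pow, map_sub, map_one, hφ] at h4
  generalize hy : φ x = y at *
  generalize hP : φ p = P at *
  generalize hk : x ^ 3 = k at *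
  have hP0 : P ≠ 0 := by rw [← hP]; simpa using hp
  clear hP hy hk hφ
  obtain ⟨b, rfl⟩ : ∃ b, y = b + 1 := ⟨y - 1, by ring⟩
  obtain ⟨l, rfl⟩ : ∃ l, k = l + 1 := ⟨k - 1, by ring⟩
  have hPe : P = b * (p + b) + l - 1 := by
    linear_combination h1 + h3 - (b^2+b) * c3
  have hb : b ≠ 0 := by
    rintro rfl
    apply hp
    have : p ^ 2 = 0 := by rw [h3]; ring
    simpa using this
  obtain ⟨s, rfl⟩ : ∃ s, p = b * (s - 1) := ⟨p / b + 1, by field_simp; ring⟩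
  have hl : l = 1 - b * s ^ 2 := by
    have : b * l = b * (1 - b * s ^ 2) := by grind
    exact mul_left_cancel₀ hb this
  have hP2 : P = s * (b - s) * b := by grind
  have h5 : b * b * (b - s) * (s ^ 3 - 1) = 0 := by grind
  rcases mul_eq_zero.mp h5 with h6 | h6
  · rcases mul_eq_zero.mp h6 with h6 | h6
    · simp_all
    · simp_all
  · have : (s - 1) ^ 3 = 0 := by grind
    have : s - 1 = 0 := by simpa using this
    simp_all

theorem rt_noSol {F : Type*} [Field F] [CharP F 3] (φ : F →+* F)
    (hφ : ∀ z, φ (φ z) = z ^ 3) (x p : F) (hp : p ≠ 0)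
    (h1 : φ x ^ 2 - φ x * x ^ 3 + 1 + φ p - p ^ 2 = 0) : False := by
  have c3 : (3 : F) = 0 := by exact_mod_cast CharP.cast_eq_zero F 3
  have h2 := congrArg φ h1
  simp only [map_mul, map_pow, map_sub, map_one, map_add, hφ, map_zero] at h2
  obtain ⟨g, hg⟩ : ∃ g, φ x + x ^ 3 = g * p := ⟨(φ x + x^3)/p, by field_simp⟩
  have key : ((g - 1) * (φ x - 1) + p) * ((g + 1) * (φ x + 1) + p) = 0 := by
    have : p ^ 2 * (((g - 1) * (φ x - 1) + p) * ((g + 1) * (φ x + 1) + p)) = 0 := by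
      clear hφ
      generalize hy : φ x = y at *
      generalize hP : φ p = P at *
      generalize hk : x ^ 3 = k at *
      have : k = g * p - y := by grind
      subst this
      have hPe : P = p ^ 2 - 1 - y ^ 2 + y * (g * p - y) := by grind
      subst hPe
      grind
    simpa [hp] using this
  rcases mul_eq_zero.mp key with h | h
  · exact rt_noSol_half φ hφ x p hp h1 (by linear_combination p * h - (1 - φ x) * hg)
  · apply rt_noSol_half φ hφ (-x) p hp
    · rw [map_neg]; linear_combination h1
    · rw [map_neg]; linear_combination p * h - (-1 - φ x) * hg

theorem rt_inj {F : Type*} [Field F] [CharP F 3] (φ : F →+* F)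
    (hφ : ∀ z, φ (φ z) = z ^ 3) (a : F) (ha : a ≠ 0) :
    Function.Injective (fun x : F => φ x ^ 2 * x ^ 3 + φ a * φ x - a ^ 2 * x) := by
  intro x y hxy
  have c3 : (3 : F) = 0 := by exact_mod_cast CharP.cast_eq_zero F 3
  by_contra hne
  simp only at hxy
  obtain ⟨z, hz⟩ : ∃ z, z = -(x + y) := ⟨_, rfl⟩
  obtain ⟨d, hd⟩ : ∃ d, d = y - x := ⟨_, rfl⟩
  have hx : x = z + d := by rw [hz, hd]; linear_combination x * c3
  have hy : y = z - d := by rw [hz, hd]; linear_combination y * c3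
  have hd0 : d ≠ 0 := by rw [hd]; exact sub_ne_zero.mpr (Ne.symm hne)
  clear hz hd
  subst hx hy
  obtain ⟨ζ, rfl⟩ : ∃ ζ, z = d * ζ := ⟨z / d, by field_simp⟩
  have hD0 : φ d ≠ 0 := by simpa using hd0
  refine rt_noSol φ hφ ζ (a / (φ d * d)) (by positivity) ?_
  simp only [map_div₀, map_mul, map_add, map_sub, hφ] at hxy ⊢
  field_simp
  generalize φ d = D at *
  generalize φ ζ = Z at *
  generalize φ a = A at *
  grind

theorem rt_digsum (m : ℕ) : ∀ j : ℕ, j < 3 ^ m →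
    ∑ i ∈ Finset.range m, (j / 3 ^ i) % 3 = (Nat.digits 3 j).sum := by
  induction m with
  | zero => intro j hj; have : j = 0 := by simpa using hj
            subst this; simp
  | succ m ih =>
    intro j hj
    rcases Nat.eq_zero_or_pos j with rfl | hpos
    · simp
    rw [Finset.sum_range_succ', Nat.digits_def' (by norm_num) hpos, List.sum_cons,
      ← ih (j / 3) (by rw [pow_succ] at hj; omega), add_comm]
    simp [pow_succ', Nat.div_div_eq_div_mul]

theorem rt_floor (m i j : ℕ) (hi : i ≤ m) (hj : j < 3 ^ m - 1) :
    3 ^ i * j / (3 ^ m - 1) = j / 3 ^ (m - i) := by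
  obtain ⟨r, rfl⟩ := Nat.exists_eq_add_of_le hi
  simp only [Nat.add_sub_cancel_left]
  have hA : 0 < 3 ^ i := by positivity
  have hB : 0 < 3 ^ r := by positivity
  rw [pow_add] at hj ⊢
  generalize 3 ^ i = A at *
  generalize 3 ^ r = B at *
  have h1 := Nat.div_add_mod j B
  have h2 := Nat.mod_lt j hB
  generalize j / B = u at *
  generalize j % B = v at *
  subst h1
  have hu : u < A := by
    by_contra hu
    push Not at hu
    have : B * A ≤ B * u := Nat.mul_le_mul_left _ hu
    rw [mul_comm B A] at this
    omega
  obtain ⟨Q, hQ⟩ : ∃ Q, A * B = Q + 1 := ⟨A * B - 1, by have := Nat.mul_pos hA hB; omega⟩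
  rw [hQ, Nat.add_sub_cancel] at hj ⊢
  have e : A * (B * u + v) = u * Q + (u + A * v) := by
    calc A * (B * u + v) = (A * B) * u + A * v := by ring
      _ = _ := by rw [hQ]; ring
  have hlt : u + A * v < Q := by
    rcases Nat.lt_or_ge v (B - 1) with h | h
    · have : A * (v + 2) ≤ A * (B + 0) := Nat.mul_le_mul_left _ (by omega)
      have h' : A * (v + 2) = A * v + 2 * A := by ring
      rw [add_zero] at this
      omega
    · have hv : B = v + 1 := by omega
      have hA' : u ≠ A - 1 := by
        intro hu'
        have : A = u + 1 := by omega
        subst this hv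
        nlinarith
      subst hv
      have h' : A * (v + 1) = A * v + A := by ring
      omega
  rw [e]
  apply Nat.div_eq_of_lt_le
  · omega
  · rw [add_mul]; omega

theorem rt_rotsum (m j : ℕ) (hj : j < 3 ^ m - 1) :
    ∑ i ∈ Finset.range m, (3 * (3 ^ i * j % (3 ^ m - 1))) / (3 ^ m - 1)
      = (Nat.digits 3 j).sum := by
  rw [← rt_digsum m j (by omega), ← Finset.sum_range_reflect (fun i => j / 3 ^ i % 3) m]
  apply Finset.sum_congr rfl
  intro i hi
  have hi : i < m := by simpa using hi
  have e1 := rt_floor m i j hi.le hj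
  have e2 := rt_floor m (i+1) j hi hj
  have hq : 0 < 3 ^ m - 1 := by omega
  have h3 : 3 * (3 ^ i * j % (3 ^ m - 1)) / (3 ^ m - 1) + 3 * (3 ^ i * j / (3 ^ m - 1))
     = 3 ^ (i+1) * j / (3 ^ m - 1) := by
    rw [← Nat.add_mul_div_left _ _ hq]
    congr 1
    have := Nat.div_add_mod (3 ^ i * j) (3 ^ m - 1)
    rw [pow_succ]
    nlinarith
  have h4 : m - i = (m - 1 - i) + 1 := by omega
  have h5 : m - (i + 1) = m - 1 - i := by omega
  rw [e1, e2, h4, h5, pow_succ, ← Nat.div_div_eq_div_mul] at h3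
  omega

theorem rt_shift {f : ℕ → ℤ} {m : ℕ} (hf : ∀ i, f (i + m) = f i) (k : ℕ) :
    ∑ n ∈ Finset.range m, f (n + k) = ∑ n ∈ Finset.range m, f n := by
  induction k with
  | zero => rfl
  | succ k ih =>
    rw [← ih]
    have h1 := Finset.sum_range_succ (fun n => f (n + k)) m
    have h2 := Finset.sum_range_succ' (fun n => f (n + k)) m
    have h3 : f (m + k) = f (0 + k) := by rw [add_comm m k, hf, zero_add]
    have h4 : ∑ n ∈ Finset.range m, f (n + (k + 1)) = ∑ n ∈ Finset.range m, f (n + 1 + k) :=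
      Finset.sum_congr rfl fun n _ => by congr 1; ring
    rw [h4]
    linarith

theorem rt_reindex {f : ℕ → ℤ} {h : ℕ} (hf : ∀ i, f (i + (2 * h + 1)) = f i) :
    ∑ n ∈ Finset.range (2 * h + 1), f (n * (h + 1)) = ∑ n ∈ Finset.range (2 * h + 1), f n := by
  have hp : Function.Periodic f (2 * h + 1) := hf
  have aux : ∀ n, n < 2 * h + 1 → (2 * (n * (h + 1))) % (2 * h + 1) = n := by
    intro n hn
    have : 2 * (n * (h + 1)) = n + (2 * h + 1) * n := by ring
    rw [this, Nat.add_mul_mod_self_left, Nat.mod_eq_of_lt hn]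
  apply Finset.sum_nbij' (fun n => n * (h + 1) % (2 * h + 1)) (fun i => 2 * i % (2 * h + 1))
  · intro n _; exact Finset.mem_range.mpr (Nat.mod_lt _ (Nat.succ_pos _))
  · intro n _; exact Finset.mem_range.mpr (Nat.mod_lt _ (Nat.succ_pos _))
  · intro n hn
    rw [Nat.mul_mod, Nat.mod_mod, ← Nat.mul_mod]
    exact aux n (by simpa using hn)
  · intro n hn
    rw [Nat.mul_mod, Nat.mod_mod, ← Nat.mul_mod, mul_assoc]
    exact aux n (by simpa using hn)
  · intro n _
    rw [hp.map_mod_nat]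

theorem rt_pot (c d c2 a b k : ℤ) (hd : 1 ≤ d) (hd' : d ≤ 4)
    (he : 1 ≤ c2) (he' : c2 ≤ 4) (ha : 0 ≤ a) (ha' : a ≤ 2) (hb : 0 ≤ b) (hb' : b ≤ 2)
    (hk : 0 ≤ k) (hk' : k ≤ 2) (h : c2 = 3 * c - b - 2 * a - k - 1) :
    (if d + 2 * c2 + 2 * b ≤ 7 then (-1 : ℤ) else 0) ≤
      (if c + 2 * d + 2 * a ≤ 7 then (-1 : ℤ) else 0) + (c - 1 - a) := by
  split_ifs <;> omega

theorem rt_abstract {m : ℕ} {a k c : ℕ → ℤ} (pa : ∀ n, a (n + m) = a n)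
    (pc : ∀ n, c (n + m) = c n)
    (ha : ∀ n, 0 ≤ a n ∧ a n ≤ 2) (hk : ∀ n, 0 ≤ k n ∧ k n ≤ 2) (hc : ∀ n, 1 ≤ c n ∧ c n ≤ 4)
    (h : ∀ n, c (n + 2) = 3 * c n - a (n + 1) - 2 * a n - k n - 1) :
    (m : ℤ) ≤ ∑ n ∈ Finset.range m, a n + ∑ n ∈ Finset.range m, k n := by
  set P : ℕ → ℤ := fun n => if c n + 2 * c (n + 1) + 2 * a n ≤ 7 then (-1 : ℤ) else 0 with hP
  have h1 : ∀ n, P (n + 1) - P n ≤ c n - 1 - a n := by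
    intro n
    have := rt_pot (c n) (c (n+1)) (c (n+2)) (a n) (a (n+1)) (k n)
      (hc _).1 (hc _).2 (hc _).1 (hc _).2 (ha _).1 (ha _).2 (ha _).1 (ha _).2 (hk _).1 (hk _).2 (h n)
    simp only [hP]
    linarith
  have h2 : P m = P 0 := by
    have e1 := pa 0
    have e2 := pc 0
    have e3 := pc 1
    simp only [zero_add] at e1 e2
    simp only [hP, e1, e2, zero_add, add_comm m 1, e3]
  have h3 := Finset.sum_le_sum (s := Finset.range m) (fun n _ => h1 n)
  rw [Finset.sum_range_sub, h2, sub_self] at h3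
  have h4 : ∑ n ∈ Finset.range m, c (n + 2) = ∑ n ∈ Finset.range m, c n := rt_shift pc 2
  have h5 : ∑ n ∈ Finset.range m, a (n + 1) = ∑ n ∈ Finset.range m, a n := rt_shift pa 1
  simp only [h, Finset.sum_sub_distrib, ← Finset.mul_sum, h5] at h4
  simp only [Finset.sum_sub_distrib, Finset.sum_const, Finset.card_range, nsmul_eq_mul, mul_one] at h3 h4
  linarith

theorem rt_digit (h j k : ℕ) (hj : j < 3 ^ (2 * h + 1) - 1) (hk : k < 3 ^ (2 * h + 1) - 1)
    (hdvd : (3 ^ (2 * h + 1) - 1) ∣ (3 ^ (2 * h + 1) - 1) / 2 + (3 ^ (h + 1) + 2) * j + k) :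
    2 * h + 1 ≤ (Nat.digits 3 j).sum + (Nat.digits 3 k).sum := by
  have hev : 2 * ((3 ^ (2 * h + 1) - 1) / 2) = 3 ^ (2 * h + 1) - 1 := by
    have : 2 ∣ 3 ^ (2 * h + 1) - 1 := by
      simpa using Nat.sub_dvd_pow_sub_pow 3 1 (2 * h + 1)
    omega
  have hq3 : (3 ^ (2 * h + 1) - 1) + 1 = 3 ^ (2 * h + 1) := by
    have : 0 < 3 ^ (2 * h + 1) := by positivity
    omega
  have hrj := rt_rotsum _ j hj
  have hrk := rt_rotsum _ k hk
  set Q := 3 ^ (2 * h + 1) - 1 with hQ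
  set e := Q / 2 with he
  clear_value e
  have hQ0 : 0 < Q := by omega
  have he0 : 0 < e := by omega
  have hper : ∀ x i, 3 ^ (i + (2 * h + 1)) * x % Q = 3 ^ i * x % Q := by
    intro x i
    rw [pow_add, ← hq3]
    have : 3 ^ i * (Q + 1) * x = 3 ^ i * x + Q * (3 ^ i * x) := by ring
    rw [this, Nat.add_mul_mod_self_left]
  -- digit functions
  have hdig : ∀ x i : ℕ, ((3 * (3 ^ i * x % Q) : ℕ) : ℤ)
      = Q * ((3 * (3 ^ i * x % Q) / Q : ℕ) : ℤ) + ((3 ^ (i + 1) * x % Q : ℕ) : ℤ) := by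
    intro x i
    have h1 := Nat.div_add_mod (3 * (3 ^ i * x % Q)) Q
    have h2 : 3 * (3 ^ i * x % Q) % Q = 3 ^ (i + 1) * x % Q := by
      rw [Nat.mul_mod, Nat.mod_mod, ← Nat.mul_mod]; congr 1; ring
    rw [h2] at h1
    exact_mod_cast h1.symm
  have hdle : ∀ x i, 3 * (3 ^ i * x % Q) / Q ≤ 2 := by
    intro x i
    have := Nat.mod_lt (3 ^ i * x) hQ0
    have : 3 * (3 ^ i * x % Q) / Q < 3 := by
      rw [Nat.div_lt_iff_lt_mul hQ0]; omega
    omega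
  have hA : ∀ i, Q ∣ 3 ^ (i + (h + 1)) * j % Q + 2 * (3 ^ i * j % Q) + 3 ^ i * k % Q + e := by
    intro i
    rw [← Nat.modEq_zero_iff_dvd]
    have h1 : e ≡ 3 ^ i * e [MOD Q] := by
      induction i with
      | zero => simp [Nat.ModEq.refl]
      | succ i ih =>
        have : 3 ^ (i + 1) * e = 3 ^ i * e + Q * 3 ^ i := by rw [pow_succ, ← hev]; ring
        rw [this]
        exact ih.trans (by simp [Nat.ModEq])
    calc _ ≡ 3 ^ (i + (h + 1)) * j + 2 * (3 ^ i * j) + 3 ^ i * k + 3 ^ i * e [MOD Q] :=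
          (((Nat.mod_modEq _ _).add ((Nat.mod_modEq _ _).mul_left 2)).add (Nat.mod_modEq _ _)).add h1
      _ = 3 ^ i * (e + (3 ^ (h + 1) + 2) * j + k) := by ring
      _ ≡ 0 [MOD Q] := (Nat.modEq_zero_iff_dvd).mpr (Dvd.dvd.mul_left hdvd _)
  choose C hC using hA
  have hCper : ∀ i, C (i + (2 * h + 1)) = C i := by
    intro i
    have h1 := hC (i + (2 * h + 1))
    rw [hper, hper, show i + (2 * h + 1) + (h + 1) = i + (h + 1) + (2 * h + 1) by ring, hper,
      hC i] at h1
    exact (Nat.eq_of_mul_eq_mul_left hQ0 h1).symm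
  have hCb : ∀ i, 1 ≤ C i ∧ C i ≤ 4 := by
    intro i
    have h1 := hC i
    have h2 := Nat.mod_lt (3 ^ i * j) hQ0
    have h3 := Nat.mod_lt (3 ^ i * k) hQ0
    have h4 := Nat.mod_lt (3 ^ (i + (h + 1)) * j) hQ0
    constructor
    · rcases Nat.eq_zero_or_pos (C i) with h0 | h0
      · rw [h0] at h1; omega
      · exact h0
    · by_contra h5
      push Not at h5
      have : Q * 5 ≤ Q * C i := Nat.mul_le_mul_left _ h5
      omega
  set D : ℕ → ℕ → ℕ := fun x i => 3 * (3 ^ i * x % Q) / Q with hD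
  have hDper : ∀ x i, D x (i + (2 * h + 1)) = D x i := by
    intro x i; simp only [hD, hper]
  have hrec : ∀ i, (C (i + 1) : ℤ) = 3 * C i - D j (i + (h + 1)) - 2 * D j i - D k i - 1 := by
    intro i
    have h1 := hC i
    have h2 := hC (i + 1)
    have d1 := hdig j i
    have d2 := hdig k i
    have d3 := hdig j (i + (h + 1))
    rw [show i + 1 + (h + 1) = i + (h + 1) + 1 by ring] at h2
    have : (Q : ℤ) * C (i + 1) = Q * (3 * C i - D j (i + (h + 1)) - 2 * D j i - D k i - 1) := by
      have hev' : 2 * (e : ℤ) = Q := by exact_mod_cast hev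
      zify at h1 h2
      simp only [hD]
      push_cast at d1 d2 d3 ⊢
      linear_combination (-1) * h2 + 3 * h1 - d3 - 2 * d1 - d2 - hev'
    exact mul_left_cancel₀ (by exact_mod_cast hQ0.ne') this
  have main := rt_abstract (m := 2 * h + 1) (a := fun n => (D j (n * (h + 1)) : ℤ))
    (k := fun n => (D k (n * (h + 1)) : ℤ)) (c := fun n => (C (n * (h + 1)) : ℤ))
    ?_ ?_ ?_ ?_ ?_ ?_
  · have r1 := rt_reindex (h := h) (f := fun i => (D j i : ℤ)) (by intro i; simp only [hDper])
    have r2 := rt_reindex (h := h) (f := fun i => (D k i : ℤ)) (by intro i; simp only [hDper])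
    rw [r1, r2] at main
    rw [← hrj, ← hrk]
    exact_mod_cast main
  · intro n
    have : Function.Periodic (D j) (2 * h + 1) := hDper j
    have := this.nat_mul (h + 1) (n * (h + 1))
    rw [← this]; congr 2; push_cast; ring
  · intro n
    have : Function.Periodic C (2 * h + 1) := hCper
    have := this.nat_mul (h + 1) (n * (h + 1))
    rw [← this]; congr 2; push_cast; ring
  · intro n; exact ⟨by positivity, by exact_mod_cast hdle _ _⟩
  · intro n; exact ⟨by positivity, by exact_mod_cast hdle _ _⟩
  · intro n; exact ⟨by exact_mod_cast (hCb _).1, by exact_mod_cast (hCb _).2⟩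
  · intro n
    have h1 := hrec (n * (h + 1))
    rw [show (n + 2) * (h + 1) = n * (h + 1) + 1 + (2 * h + 1) by ring, hCper, h1,
      show (n + 1) * (h + 1) = n * (h + 1) + (h + 1) by ring]

theorem rt_ring_descent {W : Type*} [CommRing W] [IsDomain W] (h3 : Prime (3 : W)) (a b : W)
    (h : a ^ 2 - a * b + b ^ 2 = 0) :
    ∃ a' b', a = 3 * a' ∧ b = 3 * b' ∧ a' ^ 2 - a' * b' + b' ^ 2 = 0 := by
  have h1 : (3 : W) ∣ (a + b) ^ 2 := ⟨a * b, by linear_combination h⟩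
  obtain ⟨c, hc⟩ := h3.dvd_of_dvd_pow h1
  have h2 : (3 : W) * a ^ 2 = 3 * (3 * (a * c - c ^ 2)) := by
    have : b = 3 * c - a := by linear_combination hc
    subst this
    linear_combination h
  have h4 := mul_left_cancel₀ h3.ne_zero h2
  obtain ⟨a', ha⟩ := h3.dvd_of_dvd_pow (Dvd.intro _ h4.symm)
  refine ⟨a', c - a', ha, by linear_combination hc - ha, ?_⟩
  have : (9 : W) * (a' ^ 2 - a' * (c - a') + (c - a') ^ 2) = 0 := by
    have : b = 3 * c - a := by linear_combination hc
    subst this ha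
    linear_combination h
  have h9 : (9 : W) ≠ 0 := by
    have : (9 : W) = 3 * 3 := by norm_num
    rw [this]; exact mul_ne_zero h3.ne_zero h3.ne_zero
  exact (mul_eq_zero.mp this).resolve_left h9

theorem rt_ring_gen {W F : Type*} [CommRing W] [IsDomain W] [Field F] [CharP F 3]
    (κ : W →+* F) (T : F →* W) (hκT : ∀ x, κ (T x) = x) (hT0 : T 0 = 0)
    (h3 : Prime (3 : W)) (hker : ∀ x : W, κ x = 0 → (3 : W) ∣ x)
    (hsep : ∀ x : W, (∀ n : ℕ, (3 : W) ^ n ∣ x) → x = 0) :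
    ∃ (_ : IsDomain (QuadraticAlgebra W (-1) (-1)))
      (ρ : (QuadraticAlgebra W (-1) (-1)) →+* F) (τ : F →* (QuadraticAlgebra W (-1) (-1)))
      (w : (QuadraticAlgebra W (-1) (-1))),
      (∀ x, ρ (τ x) = x) ∧ τ 0 = 0 ∧ 1 + w + w ^ 2 = 0 ∧ ρ w = 1 ∧
      (∀ x, ρ x = 0 → (1 - w) ∣ x) ∧
      (∀ (n : ℤ) (h : ℕ), (1 - w) ^ (2 * h + 1) ∣ (n : (QuadraticAlgebra W (-1) (-1))) * (w - w ^ 2)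
        → (3 : ℤ) ^ h ∣ n) := by
  have c3 : (3 : F) = 0 := by exact_mod_cast CharP.cast_eq_zero F 3
  have hker' : ∀ x : W, (3 : W) ∣ x → κ x = 0 := by
    rintro x ⟨y, rfl⟩
    rw [map_mul, map_ofNat, c3, zero_mul]
  have hnorm : ∀ a b : W, a ^ 2 - a * b + b ^ 2 = 0 → a = 0 ∧ b = 0 := by
    have key : ∀ n : ℕ, ∀ a b : W, a ^ 2 - a * b + b ^ 2 = 0 → (3 : W) ^ n ∣ a ∧ (3 : W) ^ n ∣ b := by
      intro n
      induction n with
      | zero => intro a b _; simp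
      | succ n ih =>
        intro a b hab
        obtain ⟨a', b', rfl, rfl, h'⟩ := rt_ring_descent h3 a b hab
        obtain ⟨h1, h2⟩ := ih a' b' h'
        rw [pow_succ']
        exact ⟨mul_dvd_mul_left _ h1, mul_dvd_mul_left _ h2⟩
    intro a b hab
    exact ⟨hsep a fun n => (key n a b hab).1, hsep b fun n => (key n a b hab).2⟩
  have hdom : IsDomain (QuadraticAlgebra W (-1) (-1)) := by
    haveI : NoZeroDivisors (QuadraticAlgebra W (-1) (-1)) := ⟨by
      intro x y hxy
      have h1 := congrArg QuadraticAlgebra.norm hxy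
      rw [map_mul, QuadraticAlgebra.norm_zero] at h1
      have aux : ∀ z : (QuadraticAlgebra W (-1) (-1)), QuadraticAlgebra.norm z = 0 → z = 0 := by
        intro z hz
        rw [QuadraticAlgebra.norm_def] at hz
        obtain ⟨h1, h2⟩ := hnorm z.re z.im (by linear_combination hz)
        exact QuadraticAlgebra.ext h1 h2
      exact (mul_eq_zero.mp h1).imp (aux x) (aux y)⟩
    exact NoZeroDivisors.to_isDomain (QuadraticAlgebra W (-1) (-1))
  haveI := hdom
  obtain ⟨w, hwre, hwim⟩ : ∃ w : (QuadraticAlgebra W (-1) (-1)), w.re = 0 ∧ w.im = 1 := ⟨⟨0, 1⟩, rfl, rfl⟩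
  have hw : 1 + w + w ^ 2 = 0 := by
    rw [pow_two]
    apply QuadraticAlgebra.ext <;> simp [hwre, hwim, QuadraticAlgebra.re_one, QuadraticAlgebra.im_one]
  have hdec : ∀ x : (QuadraticAlgebra W (-1) (-1)), x = algebraMap W (QuadraticAlgebra W (-1) (-1)) x.re + algebraMap W (QuadraticAlgebra W (-1) (-1)) x.im * w := by
    intro x; apply QuadraticAlgebra.ext <;> simp [hwre, hwim]
  let ρ : (QuadraticAlgebra W (-1) (-1)) →+* F :=
    { toFun := fun x => κ x.re + κ x.im
      map_one' := by simp [QuadraticAlgebra.re_one, QuadraticAlgebra.im_one]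
      map_zero' := by simp
      map_add' := by intro x y; simp; ring
      map_mul' := by
        intro x y
        simp only [QuadraticAlgebra.re_mul, QuadraticAlgebra.im_mul, map_add, map_mul, map_neg, map_one]
        linear_combination (-(κ x.im) * κ y.im) * c3 }
  let τ : F →* (QuadraticAlgebra W (-1) (-1)) := ((algebraMap W (QuadraticAlgebra W (-1) (-1)) : W →+* (QuadraticAlgebra W (-1) (-1))) : W →* (QuadraticAlgebra W (-1) (-1))).comp T
  refine ⟨hdom, ρ, τ, w, ?_, ?_, hw, ?_, ?_, ?_⟩
  · intro x
    simp [ρ, τ, hκT]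
  · simp [τ, hT0]
  · simp [ρ, hwre, hwim]
  · intro x hx
    have hx' : κ (x.re + x.im) = 0 := by rw [map_add]; exact hx
    obtain ⟨y, hy⟩ := hker _ hx'
    refine ⟨algebraMap W (QuadraticAlgebra W (-1) (-1)) y * (2 + w) - algebraMap W (QuadraticAlgebra W (-1) (-1)) x.im, ?_⟩
    have hy' := congrArg (algebraMap W (QuadraticAlgebra W (-1) (-1))) hy
    rw [map_add, map_mul, map_ofNat] at hy'
    linear_combination hdec x + hy' + algebraMap W (QuadraticAlgebra W (-1) (-1)) y * hw
  · intro n h hd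
    have e1 : (1 - w) ^ 2 = -3 * w := by linear_combination hw
    have hw0 : w ≠ 0 := by
      rintro h0
      rw [h0] at hw
      simp at hw
    have hw3 : w * (w * w) = 1 := by linear_combination (w - 1) * hw
    have h1w : 1 - w ≠ 0 := by
      intro h0
      have : (w : (QuadraticAlgebra W (-1) (-1))).im = 0 := by rw [← sub_eq_zero.mp h0]; rfl
      simp [hwim] at this
    obtain ⟨z, hz⟩ := hd
    have e2 : (n : (QuadraticAlgebra W (-1) (-1))) = 3 ^ h * ((-w) ^ h * z * (w * w)) := by
      have : (1 - w) * (n * w) = (1 - w) * ((-3 * w) ^ h * z) := by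
        rw [← e1, ← pow_mul]
        rw [pow_succ] at hz
        linear_combination hz
      have := mul_left_cancel₀ h1w this
      rw [show (-3 * w) = 3 * (-w) by ring, mul_pow] at this
      linear_combination (w * w) * this - (n : (QuadraticAlgebra W (-1) (-1))) * hw3
    have e3 : (algebraMap W (QuadraticAlgebra W (-1) (-1)) (3 ^ h)) ∣ algebraMap W (QuadraticAlgebra W (-1) (-1)) (n : W) := by
      rw [map_pow, map_ofNat, map_intCast]
      exact ⟨_, e2⟩
    rw [QuadraticAlgebra.algebraMap_dvd_iff_dvd] at e3
    clear e2 hz z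
    induction h generalizing n with
    | zero => simp
    | succ h ih =>
      have h4 : (3 : W) ∣ (n : W) := (dvd_pow_self _ (by omega)).trans e3
      have h5 := hker' _ h4
      rw [map_intCast] at h5
      obtain ⟨k, rfl⟩ := (CharP.intCast_eq_zero_iff F 3 n).mp h5
      rw [pow_succ']
      refine mul_dvd_mul_left (3 : ℤ) ?_
      apply ih
      rw [pow_succ', Int.cast_mul] at e3
      rw [show (((3 : ℕ) : ℤ) : W) = 3 by norm_num] at e3
      exact (mul_dvd_mul_iff_left h3.ne_zero).mp e3

theorem rt_ring.{u} (F : Type u) [Field F] [Finite F] [CharP F 3] :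
    ∃ (R : Type u) (_ : CommRing R) (_ : IsDomain R) (ρ : R →+* F) (τ : F →* R) (w : R),
      (∀ x, ρ (τ x) = x) ∧ τ 0 = 0 ∧ 1 + w + w ^ 2 = 0 ∧ ρ w = 1 ∧
      (∀ x, ρ x = 0 → (1 - w) ∣ x) ∧
      (∀ (n : ℤ) (h : ℕ), (1 - w) ^ (2 * h + 1) ∣ (n : R) * (w - w ^ 2) → (3 : ℤ) ^ h ∣ n) := by
  haveI : Fact (Nat.Prime 3) := ⟨Nat.prime_three⟩
  have h3 : Prime (3 : WittVector 3 F) := by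
    have := (WittVector.irreducible (p := 3) (k := F)).prime
    exact_mod_cast this
  have hker : ∀ x : WittVector 3 F, WittVector.constantCoeff x = 0 → (3 : WittVector 3 F) ∣ x := by
    intro x hx
    have : x ∈ RingHom.ker (WittVector.constantCoeff : WittVector 3 F →+* F) := hx
    rw [WittVector.ker_constantCoeff, Ideal.mem_span_singleton] at this
    exact_mod_cast this
  have c3 : (3 : F) = 0 := by exact_mod_cast CharP.cast_eq_zero F 3
  have hker' : ∀ x : WittVector 3 F, (3 : WittVector 3 F) ∣ x → WittVector.constantCoeff x = 0 := by
    rintro x ⟨y, rfl⟩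
    rw [map_mul, map_ofNat, c3, zero_mul]
  have hsep : ∀ x : WittVector 3 F, (∀ n : ℕ, (3 : WittVector 3 F) ^ n ∣ x) → x = 0 := by
    intro x hx
    by_contra hne
    obtain ⟨m, b, hb, hxb⟩ := WittVector.exists_eq_pow_p_mul x hne
    obtain ⟨y, hy⟩ := hx (m + 1)
    push_cast at hxb
    have : b = 3 * y := by
      apply mul_left_cancel₀ (pow_ne_zero m h3.ne_zero)
      rw [← hxb, hy, pow_succ, mul_assoc]
    apply hb
    exact hker' b ⟨y, this⟩
  obtain ⟨hd, rest⟩ := rt_ring_gen (WittVector.constantCoeff : WittVector 3 F →+* F)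
    (WittVector.teichmuller 3) (fun x => WittVector.teichmuller_coeff_zero 3 x)
    (WittVector.teichmuller_zero 3) h3 hker hsep
  exact ⟨_, inferInstance, hd, rest⟩

theorem rt_coprime {F R : Type*} [Field F] [CommRing R] (ρ : R →+* F) (τ : F →* R) (w : R)
    (hρτ : ∀ x, ρ (τ x) = x) (hker : ∀ x, ρ x = 0 → (1 - w) ∣ x) (J : R) (hJ : ρ J ≠ 0) :
    IsCoprime (1 - w) J := by
  have h : ρ (1 - J * τ ((ρ J)⁻¹)) = 0 := by
    rw [map_sub, map_mul, hρτ, map_one, mul_inv_cancel₀ hJ, sub_self]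
  obtain ⟨z, hz⟩ := hker _ h
  exact ⟨z, τ ((ρ J)⁻¹), by linear_combination -hz⟩

/-- the inverse Teichmueller character -/
noncomputable def rtTheta {F R : Type*} [Field F] [CommRing R] (τ : F →* R) (hτ0 : τ 0 = 0) :
    MulChar F R where
  toFun x := τ x⁻¹
  map_one' := by simp
  map_mul' x y := by rw [mul_inv, map_mul]
  map_nonunit' x hx := by
    have : x = 0 := by
      by_contra h
      exact hx (isUnit_iff_ne_zero.mpr h)
    simp [this, hτ0]

theorem rtTheta_apply {F R : Type*} [Field F] [CommRing R] (τ : F →* R) (hτ0 : τ 0 = 0) (x : F) :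
    rtTheta τ hτ0 x = τ x⁻¹ := rfl

theorem rtTheta_pow_apply {F R : Type*} [Field F] [CommRing R] (τ : F →* R) (hτ0 : τ 0 = 0) (n : ℕ)
    (x : F) (hx : x ≠ 0) :
    (rtTheta τ hτ0 ^ n) x = τ x⁻¹ ^ n := by
  have := MulChar.pow_apply_coe (rtTheta τ hτ0) n (Units.mk0 x hx)
  simpa [rtTheta_apply] using this

theorem rt_inv_sum {F : Type*} [Field F] [Fintype F] (hq : 2 < Fintype.card F) :
    ∑ y : F, y⁻¹ = 0 := by
  have e1 : ∑ y : F, y⁻¹ = ∑ y : F, y :=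
    Fintype.sum_equiv (Equiv.inv F) _ _ (fun x => rfl)
  have := FiniteField.sum_pow_lt_card_sub_one F 1 (by omega)
  rw [e1]
  simpa using this

theorem rt_jac_sum {F : Type*} [Field F] [Fintype F] [DecidableEq F] (n : ℕ)
    (hn : n ≤ Fintype.card F - 1) (hq : 2 < Fintype.card F) :
    ∑ y : F, y ^ n * (1 - y)⁻¹ = n := by
  have key : ∀ y : F, y ^ n * (1 - y)⁻¹
      = (1 - y)⁻¹ - ∑ i ∈ Finset.range n, y ^ i + (if y = 1 then (n : F) else 0) := by
    intro y
    by_cases hy : y = 1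
    · subst hy; simp
    · have h1 : 1 - y ≠ 0 := sub_ne_zero.mpr (Ne.symm hy)
      have := geom_sum_mul y n
      rw [if_neg hy]
      field_simp
      linear_combination -this
  rw [Finset.sum_congr rfl fun y _ => key y, Finset.sum_add_distrib, Finset.sum_sub_distrib,
    Finset.sum_comm]
  have h1 : ∑ y : F, (1 - y)⁻¹ = 0 := by
    have e1 : ∑ y : F, (1 - y)⁻¹ = ∑ y : F, y⁻¹ :=
      Equiv.sum_comp (Equiv.subLeft (1 : F)) (fun y => y⁻¹)
    rw [e1, rt_inv_sum hq]
  have h2 : ∑ i ∈ Finset.range n, ∑ y : F, y ^ i = 0 := by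
    apply Finset.sum_eq_zero
    intro i hi
    apply FiniteField.sum_pow_lt_card_sub_one
    rw [Finset.mem_range] at hi
    omega
  rw [h1, h2]
  simp

theorem rt_digits_three (a : ℕ) : (Nat.digits 3 (3 * a)).sum = (Nat.digits 3 a).sum := by
  rcases Nat.eq_zero_or_pos a with rfl | h
  · simp
  · rw [Nat.digits_def' (by norm_num) (by omega)]
    simp

theorem rt_digits_succ (b : ℕ) (h : (b + 1) % 3 ≠ 0) :
    (Nat.digits 3 (b + 1)).sum = (Nat.digits 3 b).sum + 1 := by
  rw [Nat.digits_def' (by norm_num) (by omega)]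
  have h2 : (b + 1) / 3 = b / 3 := by omega
  have h3 : (b + 1) % 3 = b % 3 + 1 := by omega
  rcases Nat.eq_zero_or_pos b with rfl | hb
  · simp
  · rw [Nat.digits_def' (n := b) (by norm_num) hb, h2, h3]
    simp only [List.sum_cons]
    omega

theorem rt_gauss_dvd {F R : Type*} [Field F] [Fintype F] [CharP F 3] [CommRing R] [IsDomain R]
    (ρ : R →+* F) (τ : F →* R) (w : R) (hτ0 : τ 0 = 0)
    (hρτ : ∀ x, ρ (τ x) = x) (hker : ∀ x, ρ x = 0 → (1 - w) ∣ x)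
    (ψ : AddChar F R) (hψ3 : ∀ x, ψ (x ^ 3) = ψ x) (hψ1 : ∀ x, ρ (ψ x) = 1)
    (hq : 2 < Fintype.card F) (a : ℕ) (ha : a < Fintype.card F - 1) :
    (1 - w) ^ (Nat.digits 3 a).sum ∣ gaussSum (rtTheta τ hτ0 ^ a) ψ := by
  classical
  induction a using Nat.strong_induction_on with
  | _ a ih =>
  rcases Nat.eq_zero_or_pos a with rfl | hpos
  · simp
  by_cases h3 : a % 3 = 0
  · obtain ⟨c, rfl⟩ : ∃ c, a = 3 * c := ⟨a / 3, by omega⟩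
    have hc : c ≠ 0 := by omega
    have : gaussSum (rtTheta τ hτ0 ^ (3 * c)) ψ = gaussSum (rtTheta τ hτ0 ^ c) ψ := by
      unfold gaussSum
      have hb : Function.Bijective (frobenius F 3) :=
        Finite.injective_iff_bijective.mp (frobenius F 3).injective
      rw [← (Equiv.ofBijective _ hb).sum_comp
        (fun x => (rtTheta τ hτ0 ^ c) x * ψ x)]
      apply Finset.sum_congr rfl
      intro x _
      simp only [Equiv.ofBijective_apply, frobenius_def]
      rw [hψ3, pow_mul', MulChar.pow_apply' _ (by norm_num), map_pow]
    rw [this, rt_digits_three]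
    exact ih c (by omega) (by omega)
  · obtain ⟨b, rfl⟩ : ∃ b, a = b + 1 := ⟨a - 1, by omega⟩
    rw [rt_digits_succ b h3]
    have hne : rtTheta τ hτ0 ^ b * rtTheta τ hτ0 ≠ 1 := by
      rw [← pow_succ]
      intro h1
      obtain ⟨g, hg⟩ := IsCyclic.exists_generator (α := Fˣ)
      have h2 := congrArg (fun χ : MulChar F R => ρ (χ (g : F))) h1
      rw [rtTheta_pow_apply _ _ _ _ g.ne_zero, map_pow, hρτ, MulChar.one_apply_coe, map_one,
        inv_pow, inv_eq_one] at h2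
      have h3 : g ^ (b + 1) = 1 := by ext; simpa using h2
      have h4 := orderOf_dvd_of_pow_eq_one h3
      rw [orderOf_eq_card_of_forall_mem_zpowers hg, Nat.card_eq_fintype_card,
        Fintype.card_units] at h4
      have := Nat.le_of_dvd (by omega) h4
      omega
    have hJ := jacobiSum_mul_nontrivial hne ψ
    rw [← pow_succ] at hJ
    have hρJ : ρ (jacobiSum (rtTheta τ hτ0 ^ b) (rtTheta τ hτ0))
        = ((Fintype.card F - 1 - b : ℕ) : F) := by
      rw [← rt_jac_sum (F := F) (Fintype.card F - 1 - b) (by omega) hq]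
      unfold jacobiSum
      rw [map_sum]
      apply Finset.sum_congr rfl
      intro y _
      rw [map_mul, rtTheta_apply, hρτ]
      congr 1
      by_cases hy : y = 0
      · subst hy
        rw [zero_pow (by omega), MulChar.map_zero, map_zero]
      · rw [rtTheta_pow_apply _ _ _ _ hy, map_pow, hρτ, inv_pow]
        apply inv_eq_of_mul_eq_one_right
        rw [← pow_add, show b + (Fintype.card F - 1 - b) = Fintype.card F - 1 by omega]
        exact FiniteField.pow_card_sub_one_eq_one y hy
    have hρJ0 : ρ (jacobiSum (rtTheta τ hτ0 ^ b) (rtTheta τ hτ0)) ≠ 0 := by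
      rw [hρJ]
      intro h0
      have h1 : (((Fintype.card F - 1 - b : ℕ) : F)) + ((b + 1 : ℕ) : F) = 0 := by
        rw [← Nat.cast_add, show Fintype.card F - 1 - b + (b + 1) = Fintype.card F by omega]
        exact Nat.cast_card_eq_zero F
      rw [h0, zero_add, CharP.cast_eq_zero_iff F 3] at h1
      omega
    have hcop := rt_coprime ρ τ w hρτ hker _ hρJ0
    have hg1 : (1 - w) ∣ gaussSum (rtTheta τ hτ0) ψ := by
      apply hker
      unfold gaussSum
      rw [map_sum]
      have : ∀ x : F, ρ (rtTheta τ hτ0 x * ψ x) = x⁻¹ := by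
        intro x
        rw [map_mul, hψ1, rtTheta_apply, hρτ, mul_one]
      rw [Finset.sum_congr rfl fun x _ => this x, rt_inv_sum hq]
    have hb := ih b (by omega) (by omega)
    have h5 := mul_dvd_mul hb hg1
    rw [← pow_succ, ← hJ] at h5
    exact (hcop.pow_left).dvd_of_dvd_mul_right h5

theorem rt_expand {F R : Type*} [Field F] [Fintype F] [CommRing R] [IsDomain R]
    (ρ : R →+* F) (τ : F →* R) (hτ0 : τ 0 = 0) (hρτ : ∀ x, ρ (τ x) = x)
    (ψ : AddChar F R) (x : F) (hx : x ≠ 0) :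
    ((Fintype.card F - 1 : ℕ) : R) * ψ x
      = ∑ k ∈ Finset.range (Fintype.card F - 1), gaussSum (rtTheta τ hτ0 ^ k) ψ * τ x ^ k := by
  classical
  have h0 : ∀ k, (rtTheta τ hτ0 ^ k) (0 : F) = 0 := fun k => MulChar.map_zero _
  have key : ∀ y : F, ∑ k ∈ Finset.range (Fintype.card F - 1),
      (rtTheta τ hτ0 ^ k) y * ψ y * τ x ^ k
      = if y = x then ((Fintype.card F - 1 : ℕ) : R) * ψ x else 0 := by
    intro y
    by_cases hy : y = 0
    · subst hy
      rw [if_neg (Ne.symm hx)]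
      apply Finset.sum_eq_zero
      intro k _
      rw [h0]; ring
    have h1 : ∀ k ∈ Finset.range (Fintype.card F - 1), (rtTheta τ hτ0 ^ k) y * ψ y * τ x ^ k
        = ψ y * τ (y⁻¹ * x) ^ k := by
      intro k _
      rw [rtTheta_pow_apply _ _ _ _ hy, map_mul]
      ring
    rw [Finset.sum_congr rfl h1, ← Finset.mul_sum]
    split_ifs with hyx
    · subst hyx
      rw [inv_mul_cancel₀ hy]
      simp [mul_comm]
    · have h2 := geom_sum_mul (τ (y⁻¹ * x)) (Fintype.card F - 1)
      rw [← map_pow, FiniteField.pow_card_sub_one_eq_one _ (mul_ne_zero (inv_ne_zero hy) hx),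
        map_one, sub_self] at h2
      rcases mul_eq_zero.mp h2 with h3 | h3
      · rw [h3, mul_zero]
      · exfalso
        have h4 := congrArg ρ (sub_eq_zero.mp h3)
        rw [hρτ, map_one] at h4
        apply hyx
        field_simp at h4
        exact h4.symm
  unfold gaussSum
  simp_rw [Finset.sum_mul]
  rw [Finset.sum_comm, Finset.sum_congr rfl fun y _ => key y]
  simp

theorem rt_tau_sum {F R : Type*} [Field F] [Fintype F] [DecidableEq F] [CommRing R] [IsDomain R]
    (ρ : R →+* F) (τ : F →* R) (hρτ : ∀ x, ρ (τ x) = x) (N : ℕ)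
    (hN : ¬ (Fintype.card F - 1) ∣ N) :
    ∑ x ∈ Finset.univ \ {(0 : F)}, τ x ^ N = 0 := by
  obtain ⟨g, hg⟩ := IsCyclic.exists_generator (α := Fˣ)
  have hgN : τ g ^ N ≠ 1 := by
    intro h
    have h2 := congrArg ρ h
    rw [map_pow, hρτ, map_one] at h2
    have h3 : g ^ N = 1 := by ext; simpa using h2
    have h4 := orderOf_dvd_of_pow_eq_one h3
    rw [orderOf_eq_card_of_forall_mem_zpowers hg, Nat.card_eq_fintype_card,
      Fintype.card_units] at h4
    exact hN h4
  have h1 : τ g ^ N * ∑ x ∈ Finset.univ \ {(0 : F)}, τ x ^ N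
      = ∑ x ∈ Finset.univ \ {(0 : F)}, τ x ^ N := by
    rw [Finset.mul_sum]
    apply Finset.sum_bij (fun x _ => (g : F) * x)
    · intro x hx
      simp only [Finset.mem_sdiff, Finset.mem_univ, Finset.mem_singleton, true_and] at hx ⊢
      exact mul_ne_zero g.ne_zero hx
    · intro x _ y _ h
      exact mul_left_cancel₀ g.ne_zero h
    · intro y hy
      simp only [Finset.mem_sdiff, Finset.mem_univ, Finset.mem_singleton, true_and] at hy
      refine ⟨(g : F)⁻¹ * y, ?_, by field_simp⟩
      simp only [Finset.mem_sdiff, Finset.mem_univ, Finset.mem_singleton, true_and]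
      exact mul_ne_zero (inv_ne_zero g.ne_zero) hy
    · intro x _
      rw [map_mul, mul_pow]
  have h2 : (τ g ^ N - 1) * ∑ x ∈ Finset.univ \ {(0 : F)}, τ x ^ N = 0 := by
    linear_combination h1
  exact (mul_eq_zero.mp h2).resolve_left (sub_ne_zero.mpr hgN)

theorem rt_coefs {F R : Type*} [Field F] [Fintype F] [CharP F 3] [CommRing R] [IsDomain R]
    (ρ : R →+* F) (τ : F →* R) (w : R) (hτ0 : τ 0 = 0)
    (hρτ : ∀ x, ρ (τ x) = x) (hker : ∀ x, ρ x = 0 → (1 - w) ∣ x)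
    (ψ : AddChar F R) (hψ3 : ∀ x, ψ (x ^ 3) = ψ x) (hψ1 : ∀ x, ρ (ψ x) = 1)
    (hq : 2 < Fintype.card F) (Γ : F) :
    ∃ c : ℕ → R, (∀ k < Fintype.card F - 1, (1 - w) ^ (Nat.digits 3 k).sum ∣ c k) ∧
      ∀ x : F, x ≠ 0 → ((Fintype.card F - 1 : ℕ) : R) * ψ (Γ * x)
        = ∑ k ∈ Finset.range (Fintype.card F - 1), c k * τ x ^ k := by
  by_cases hΓ : Γ = 0
  · subst hΓ
    refine ⟨fun k => if k = 0 then ((Fintype.card F - 1 : ℕ) : R) else 0, ?_, ?_⟩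
    · intro k hk
      by_cases h : k = 0
      · subst h; simp
      · simp [h]
    · intro x hx
      rw [Finset.sum_eq_single 0]
      · simp
      · intro k _ hk; simp [hk]
      · intro h; simp at h; omega
  · refine ⟨fun k => gaussSum (rtTheta τ hτ0 ^ k) ψ * τ Γ ^ k, ?_, ?_⟩
    · intro k hk
      exact (rt_gauss_dvd ρ τ w hτ0 hρτ hker ψ hψ3 hψ1 hq k hk).mul_right _
    · intro x hx
      rw [rt_expand ρ τ hτ0 hρτ ψ _ (mul_ne_zero hΓ hx)]
      apply Finset.sum_congr rfl
      intro k _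
      rw [map_mul, mul_pow, mul_assoc]

theorem rt_sum_dvd {F R : Type*} [Field F] [Fintype F] [DecidableEq F] [CharP F 3] [CommRing R]
    [IsDomain R] (ρ : R →+* F) (τ : F →* R) (w : R) (hτ0 : τ 0 = 0)
    (hρτ : ∀ x, ρ (τ x) = x) (hker : ∀ x, ρ x = 0 → (1 - w) ∣ x)
    (ψ : AddChar F R) (hψ3 : ∀ x, ψ (x ^ 3) = ψ x) (hψ1 : ∀ x, ρ (ψ x) = 1)
    (hq : 2 < Fintype.card F) (M e m : ℕ)
    (hdig : ∀ j k : ℕ, j < Fintype.card F - 1 → k < Fintype.card F - 1 →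
      (Fintype.card F - 1) ∣ M + e * j + k → m ≤ (Nat.digits 3 j).sum + (Nat.digits 3 k).sum)
    (B Γ : F) :
    (1 - w) ^ m ∣ ∑ x ∈ Finset.univ \ {(0 : F)}, τ x ^ M * ψ (B * x ^ e + Γ * x) := by
  obtain ⟨c, hc, hc'⟩ := rt_coefs ρ τ w hτ0 hρτ hker ψ hψ3 hψ1 hq B
  obtain ⟨d, hd, hd'⟩ := rt_coefs ρ τ w hτ0 hρτ hker ψ hψ3 hψ1 hq Γ
  have hcop : IsCoprime (1 - w) (((Fintype.card F - 1 : ℕ) : R) * ((Fintype.card F - 1 : ℕ) : R)) := by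
    apply rt_coprime ρ τ w hρτ hker
    rw [map_mul, map_natCast]
    have : ((Fintype.card F - 1 : ℕ) : F) = -1 := by
      rw [Nat.cast_sub (by omega), Nat.cast_card_eq_zero]; simp
    rw [this]; simp
  refine hcop.pow_left.dvd_of_dvd_mul_left ?_
  have : ((Fintype.card F - 1 : ℕ) : R) * ((Fintype.card F - 1 : ℕ) : R) *
      ∑ x ∈ Finset.univ \ {(0 : F)}, τ x ^ M * ψ (B * x ^ e + Γ * x)
      = ∑ j ∈ Finset.range (Fintype.card F - 1), ∑ k ∈ Finset.range (Fintype.card F - 1),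
        (c j * d k) * ∑ x ∈ Finset.univ \ {(0 : F)}, τ x ^ (M + e * j + k) := by
    simp_rw [Finset.mul_sum]
    rw [Finset.sum_congr rfl fun j _ => Finset.sum_comm, Finset.sum_comm]
    apply Finset.sum_congr rfl
    intro x hx
    simp only [Finset.mem_sdiff, Finset.mem_univ, Finset.mem_singleton, true_and] at hx
    rw [AddChar.map_add_eq_mul]
    have e1 := hc' (x ^ e) (pow_ne_zero e hx)
    have e2 := hd' x hx
    calc _ = τ x ^ M * ((((Fintype.card F - 1 : ℕ) : R) * ψ (B * x ^ e)) *
              (((Fintype.card F - 1 : ℕ) : R) * ψ (Γ * x))) := by ring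
      _ = _ := by
        rw [e1, e2, Finset.sum_mul_sum, Finset.mul_sum]
        apply Finset.sum_congr rfl
        intro j _
        rw [Finset.mul_sum]
        apply Finset.sum_congr rfl
        intro k _
        rw [map_pow, pow_add, pow_add, pow_mul]
        ring
  rw [this]
  apply Finset.dvd_sum
  intro j hj
  apply Finset.dvd_sum
  intro k hk
  rw [Finset.mem_range] at hj hk
  by_cases hdvd : (Fintype.card F - 1) ∣ M + e * j + k
  · apply Dvd.dvd.mul_right
    have := mul_dvd_mul (hc j hj) (hd k hk)
    rw [← pow_add] at this
    exact (pow_dvd_pow _ (hdig j k hj hk hdvd)).trans this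
  · rw [rt_tau_sum ρ τ hρτ _ hdvd, mul_zero]
    exact dvd_zero _

theorem rt_split {F R : Type*} [Field F] [Fintype F] [DecidableEq F] [CommRing R]
    (f : F → ZMod 3) (hf : ∀ x, f (-x) = -f x) (hneg : quadraticChar F (-1) = -1) (w : R) :
    ∑ x : F, ((quadraticChar F x : ℤ) : R) * w ^ (f x).val
      = ((∑ x : F, if f x = 1 then quadraticChar F x else 0 : ℤ) : R) * (w - w ^ 2) := by
  have hchi : ∀ x : F, quadraticChar F (-x) = - quadraticChar F x := by
    intro x
    rw [← neg_one_mul, map_mul, hneg, neg_one_mul]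
  have h0 : (∑ x : F, if f x = 0 then quadraticChar F x else 0 : ℤ) = 0 := by
    have : (∑ x : F, if f x = 0 then quadraticChar F x else 0 : ℤ)
        = - (∑ x : F, if f x = 0 then quadraticChar F x else 0 : ℤ) := by
      rw [← Finset.sum_neg_distrib]
      apply Fintype.sum_equiv (Equiv.neg F)
      intro x
      simp only [Equiv.neg_apply, hf, hchi, neg_eq_zero]
      split_ifs <;> simp
    linarith
  have h2 : (∑ x : F, if f x = 2 then quadraticChar F x else 0 : ℤ)
      = - (∑ x : F, if f x = 1 then quadraticChar F x else 0 : ℤ) := by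
    rw [← Finset.sum_neg_distrib]
    apply Fintype.sum_equiv (Equiv.neg F)
    intro x
    simp only [Equiv.neg_apply, hf, hchi]
    have : (-f x = 1) ↔ f x = 2 := by
      generalize f x = t
      revert t; decide
    rw [if_congr this rfl rfl]
    split_ifs <;> simp
  have key : ∀ x : F, ((quadraticChar F x : ℤ) : R) * w ^ (f x).val
      = (((if f x = 0 then quadraticChar F x else 0 : ℤ)) : R)
        + (((if f x = 1 then quadraticChar F x else 0 : ℤ)) : R) * w
        + (((if f x = 2 then quadraticChar F x else 0 : ℤ)) : R) * w ^ 2 := by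
    intro x
    have h3 : ∀ t : ZMod 3, t = 0 ∨ t = 1 ∨ t = 2 := by decide
    have h01 : (0 : ZMod 3) ≠ 1 := by decide
    have h02 : (0 : ZMod 3) ≠ 2 := by decide
    have h12 : (1 : ZMod 3) ≠ 2 := by decide
    have hv1 : (1 : ZMod 3).val = 1 := by decide
    have hv2 : (2 : ZMod 3).val = 2 := by decide
    rcases h3 (f x) with h | h | h
    · simp [h, h01, h02]
    · simp [h, h01.symm, h12, hv1]
    · simp [h, h02.symm, h12.symm, hv2]
  rw [Finset.sum_congr rfl fun x _ => key x, Finset.sum_add_distrib, Finset.sum_add_distrib,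
    ← Finset.sum_mul, ← Finset.sum_mul, ← Int.cast_sum, ← Int.cast_sum, ← Int.cast_sum, h0, h2]
  push_cast
  ring

theorem rt_odd {F : Type*} [Field F] [Fintype F] [DecidableEq F] [Algebra (ZMod 3) F]
    (hodd : Odd (Fintype.card F)) (r : F → F) (hr : Function.Bijective r) (hr0 : r 0 = 0) :
    (∑ x : F, if Algebra.trace (ZMod 3) F (r x) = 1 then quadraticChar F x else 0 : ℤ) ≠ 0 := by
  obtain ⟨t, ht⟩ := Algebra.trace_surjective (ZMod 3) F 1
  have shift : ∀ c : ZMod 3, (∑ y : F, if Algebra.trace (ZMod 3) F y = c + 1 then (1 : ℤ) else 0)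
      = ∑ y : F, if Algebra.trace (ZMod 3) F y = c then (1 : ℤ) else 0 := by
    intro c
    symm
    apply Fintype.sum_equiv (Equiv.addRight t)
    intro y
    simp [ht]
  have hs0 := shift 0
  have hs1 := shift 1
  rw [zero_add] at hs0
  rw [show (1 + 1 : ZMod 3) = 2 by decide] at hs1
  have htot : (∑ y : F, if Algebra.trace (ZMod 3) F y = 0 then (1 : ℤ) else 0)
      + (∑ y : F, if Algebra.trace (ZMod 3) F y = 1 then (1 : ℤ) else 0)
      + (∑ y : F, if Algebra.trace (ZMod 3) F y = 2 then (1 : ℤ) else 0) = Fintype.card F := by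
    rw [← Finset.sum_add_distrib, ← Finset.sum_add_distrib]
    have : ∀ y : F, ((if Algebra.trace (ZMod 3) F y = 0 then (1 : ℤ) else 0)
        + (if Algebra.trace (ZMod 3) F y = 1 then (1 : ℤ) else 0)
        + (if Algebra.trace (ZMod 3) F y = 2 then (1 : ℤ) else 0)) = 1 := by
      intro y
      generalize Algebra.trace (ZMod 3) F y = s
      revert s; decide
    rw [Finset.sum_congr rfl fun y _ => this y]
    simp
  have hcount : (∑ x : F, if Algebra.trace (ZMod 3) F (r x) = 1 then (1 : ℤ) else 0)
      = ∑ y : F, if Algebra.trace (ZMod 3) F y = 1 then (1 : ℤ) else 0 :=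
    (Equiv.ofBijective r hr).sum_comp
      (fun y => if Algebra.trace (ZMod 3) F y = 1 then (1 : ℤ) else 0)
  have hpar : (2 : ℤ) ∣ (∑ x : F, if Algebra.trace (ZMod 3) F (r x) = 1 then quadraticChar F x else 0 : ℤ)
      - ∑ x : F, if Algebra.trace (ZMod 3) F (r x) = 1 then (1 : ℤ) else 0 := by
    rw [← Finset.sum_sub_distrib]
    apply Finset.dvd_sum
    intro x _
    split_ifs with hx
    · have hx0 : x ≠ 0 := by
        rintro rfl
        rw [hr0, map_zero] at hx
        exact absurd hx (by decide)
      rcases quadraticChar_dichotomy hx0 with h | h <;> rw [h] <;> decide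
    · simp
  intro hz
  rw [hz, hcount] at hpar
  obtain ⟨k, hk⟩ := hodd
  rw [hk] at htot
  push_cast at htot
  omega

theorem rt_parseval {F : Type*} [Field F] [Fintype F] [DecidableEq F] [Algebra (ZMod 3) F]
    (hneg : quadraticChar F (-1) = -1) (r : F → F) (hr : Function.Bijective r)
    (hrodd : ∀ x, r (-x) = - r x) :
    3 * ∑ b : F, (∑ x : F, if Algebra.trace (ZMod 3) F (b * r x) = 1 then quadraticChar F x else 0 : ℤ) ^ 2
      = (Fintype.card F : ℤ) * (Fintype.card F - 1) := by
  obtain ⟨w, hw⟩ : ∃ w : ℂ, IsPrimitiveRoot w 3 := ⟨_, Complex.isPrimitiveRoot_exp 3 (by norm_num)⟩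
  have hw3 : w ^ 3 = 1 := hw.pow_eq_one
  have hw1 : w ≠ 1 := hw.ne_one (by norm_num)
  have hw2 : 1 + w + w ^ 2 = 0 := by
    have : (w - 1) * (1 + w + w ^ 2) = 0 := by linear_combination hw3
    exact (mul_eq_zero.mp this).resolve_left (sub_ne_zero.mpr hw1)
  let ψ : AddChar F ℂ := (AddChar.zmodChar 3 hw3).compAddMonoidHom
    (Algebra.trace (ZMod 3) F).toAddMonoidHom
  have hψ : ∀ x, ψ x = w ^ (Algebra.trace (ZMod 3) F x).val := fun x => rfl
  have hprim : ψ.IsPrimitive := by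
    apply AddChar.IsPrimitive.of_ne_one
    intro h1
    obtain ⟨t, ht⟩ := Algebra.trace_surjective (ZMod 3) F 1
    have h2 : ψ t = 1 := by rw [h1]; rfl
    rw [hψ, ht, show (1 : ZMod 3).val = 1 by decide, pow_one] at h2
    exact hw1 h2
  have hE : ∀ b : F, ∑ x : F, ((quadraticChar F x : ℤ) : ℂ) * ψ (b * r x)
      = ((∑ x : F, if Algebra.trace (ZMod 3) F (b * r x) = 1 then quadraticChar F x else 0 : ℤ) : ℂ)
        * (w - w ^ 2) := by
    intro b
    have := rt_split (R := ℂ) (fun x => Algebra.trace (ZMod 3) F (b * r x))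
      (by intro x; rw [hrodd, mul_neg, map_neg]) hneg w
    exact this
  have hsum : ∑ b : F, (∑ x : F, ((quadraticChar F x : ℤ) : ℂ) * ψ (b * r x)) ^ 2
      = - ((Fintype.card F : ℂ) * (Fintype.card F - 1)) := by
    have e1 : ∀ b : F, (∑ x : F, ((quadraticChar F x : ℤ) : ℂ) * ψ (b * r x)) ^ 2
        = ∑ x : F, ∑ y : F, ((quadraticChar F x : ℤ) : ℂ) * ((quadraticChar F y : ℤ) : ℂ)
          * ψ (b * (r x + r y)) := by
      intro b
      rw [pow_two, Finset.sum_mul_sum]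
      refine Finset.sum_congr rfl fun x _ => Finset.sum_congr rfl fun y _ => ?_
      rw [mul_add, AddChar.map_add_eq_mul]
      ring
    rw [Finset.sum_congr rfl fun b _ => e1 b, Finset.sum_comm]
    have e2 : ∀ x : F, ∑ b : F, ∑ y : F, ((quadraticChar F x : ℤ) : ℂ) * ((quadraticChar F y : ℤ) : ℂ)
          * ψ (b * (r x + r y)) = if x = 0 then 0 else -(Fintype.card F : ℂ) := by
      intro x
      rw [Finset.sum_comm]
      have e3 : ∀ y : F, ∑ b : F, ((quadraticChar F x : ℤ) : ℂ) * ((quadraticChar F y : ℤ) : ℂ)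
          * ψ (b * (r x + r y)) = if y = -x then ((quadraticChar F x : ℤ) : ℂ) *
            ((quadraticChar F (-x) : ℤ) : ℂ) * (Fintype.card F : ℂ) else 0 := by
        intro y
        rw [← Finset.mul_sum, AddChar.sum_mulShift _ hprim]
        by_cases hy : y = -x
        · subst hy
          simp [hrodd]
        · have : r x + r y ≠ 0 := by
            intro h
            apply hy
            apply hr.1
            rw [hrodd]
            linear_combination h
          simp [hy, this]
      rw [Finset.sum_congr rfl fun y _ => e3 y, Finset.sum_ite_eq' Finset.univ (-x)]
      rw [if_pos (Finset.mem_univ _)]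
      by_cases hx : x = 0
      · simp [hx]
      · rw [if_neg hx, ← neg_one_mul x, map_mul, hneg]
        rcases quadraticChar_dichotomy hx with h | h <;> rw [h] <;> simp
    rw [Finset.sum_congr rfl fun x _ => e2 x]
    rw [← Finset.add_sum_erase _ _ (Finset.mem_univ (0 : F)), if_pos rfl,
      Finset.sum_congr rfl fun x hx => if_neg (Finset.ne_of_mem_erase hx)]
    rw [Finset.sum_const, Finset.card_erase_of_mem (Finset.mem_univ _), Finset.card_univ,
      nsmul_eq_mul, Nat.cast_sub Fintype.card_pos]
    push_cast
    ring
  rw [Finset.sum_congr rfl fun b _ => by rw [hE b]] at hsum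
  have hww : (w - w ^ 2) ^ 2 = -3 := by linear_combination (w ^ 2 - 3 * w + 3) * hw2
  have : ((3 * ∑ b : F, (∑ x : F, if Algebra.trace (ZMod 3) F (b * r x) = 1 then quadraticChar F x else 0 : ℤ) ^ 2 : ℤ) : ℂ)
      = (((Fintype.card F : ℤ) * (Fintype.card F - 1) : ℤ) : ℂ) := by
    rw [Int.cast_mul, Int.cast_sum, Int.cast_mul, Int.cast_sub]
    simp_rw [mul_pow, hww, ← Finset.sum_mul] at hsum
    rw [Int.cast_natCast, Int.cast_one, Int.cast_ofNat]
    simp_rw [Int.cast_pow]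
    linear_combination -hsum
  exact_mod_cast this

theorem rt_trace_pow {F : Type*} [Field F] [Fintype F] [Algebra (ZMod 3) F] (n : ℕ) (x : F) :
    Algebra.trace (ZMod 3) F (x ^ 3 ^ n) = Algebra.trace (ZMod 3) F x := by
  induction n with
  | zero => simp
  | succ n ih =>
    rw [pow_succ, pow_mul, ← ih]
    have := Algebra.trace_eq_of_algEquiv (FiniteField.frobeniusAlgEquivOfAlgebraic (ZMod 3) F)
      (x ^ 3 ^ n)
    rw [FiniteField.coe_frobeniusAlgEquivOfAlgebraic, ZMod.card] at this
    exact this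

theorem rt_neg_one {F : Type*} [Field F] [Fintype F] [DecidableEq F] [CharP F 3] (h : ℕ)
    (hcard : Fintype.card F = 3 ^ (2 * h + 1)) : quadraticChar F (-1) = -1 := by
  have hc : ringChar F ≠ 2 := by rw [ringChar.eq F 3]; norm_num
  rw [quadraticChar_neg_one hc, hcard]
  have : ((3 ^ (2 * h + 1) : ℕ) : ZMod 4) = 3 := by
    push_cast
    rw [pow_succ, pow_mul, show (3 : ZMod 4) ^ 2 = 1 by decide, one_pow, one_mul]
  rw [this]
  decide

theorem rt_three_dvd {F : Type*} [Field F] [Fintype F] [DecidableEq F] [Algebra (ZMod 3) F]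
    [CharP F 3] (h : ℕ) (hcard : Fintype.card F = 3 ^ (2 * h + 1)) (hh : 2 < Fintype.card F)
    (φ : F →+* F)
    (hφ : ∀ x, φ x = x ^ 3 ^ (h + 1)) (hφφ : ∀ z, φ (φ z) = z ^ 3) (u b : F) :
    (3 : ℤ) ^ h ∣ ∑ x : F, if Algebra.trace (ZMod 3) F
      (b * (φ x ^ 2 * x ^ 3 + φ u * φ x - u ^ 2 * x)) = 1 then quadraticChar F x else 0 := by
  obtain ⟨R, iR, iD, ρ, τ, w, hρτ, hτ0, hw, hρw, hker, hfin⟩ := rt_ring F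
  have hw3 : w ^ 3 = 1 := by linear_combination (w - 1) * hw
  apply hfin
  rw [← rt_split (R := R) (fun x => Algebra.trace (ZMod 3) F
      (b * (φ x ^ 2 * x ^ 3 + φ u * φ x - u ^ 2 * x))) (by
        intro x
        rw [← map_neg (Algebra.trace (ZMod 3) F), map_neg φ]
        congr 1; ring) (rt_neg_one h hcard) w]
  let ψ : AddChar F R := (AddChar.zmodChar 3 hw3).compAddMonoidHom
    (Algebra.trace (ZMod 3) F).toAddMonoidHom
  have hψ : ∀ x, ψ x = w ^ (Algebra.trace (ZMod 3) F x).val := fun x => rfl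
  have hbij : Function.Bijective φ := Finite.injective_iff_bijective.mp φ.injective
  obtain ⟨b', rfl⟩ := hbij.2 b
  have hc : ringChar F ≠ 2 := by rw [ringChar.eq F 3]; norm_num
  have hτneg : τ (-1) = -1 := by
    have h1 : (τ (-1) - 1) * (τ (-1) + 1) = 0 := by
      have : τ (-1) * τ (-1) = 1 := by rw [← map_mul]; simp
      linear_combination this
    rcases mul_eq_zero.mp h1 with h2 | h2
    · exfalso
      have h3 := congrArg ρ (sub_eq_zero.mp h2)
      rw [hρτ, map_one] at h3
      exact Ring.neg_one_ne_one_of_char_ne_two hc h3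
    · linear_combination h2
  have hτχ : ∀ x : F, x ≠ 0 → τ x ^ ((3 ^ (2 * h + 1) - 1) / 2) = ((quadraticChar F x : ℤ) : R) := by
    intro x hx
    have hodd : Odd (Fintype.card F) := by rw [hcard]; exact Odd.pow (by decide)
    have h1 := quadraticChar_eq_pow_of_char_ne_two' hc x
    rw [show Fintype.card F / 2 = (3 ^ (2 * h + 1) - 1) / 2 by
      rw [← hcard]; obtain ⟨k, hk⟩ := hodd; omega] at h1
    rw [← map_pow, ← h1]
    rcases quadraticChar_dichotomy hx with h | h <;> rw [h] <;> simp [hτneg]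
  have htr : ∀ x : F, Algebra.trace (ZMod 3) F
      (φ b' * (φ x ^ 2 * x ^ 3 + φ u * φ x - u ^ 2 * x))
      = Algebra.trace (ZMod 3) F (b' * x ^ (3 ^ (h + 1) + 2) + (b' * u - φ b' * u ^ 2) * x) := by
    intro x
    have h1 : φ b' * (φ x ^ 2 * x ^ 3 + φ u * φ x - u ^ 2 * x)
        = φ (b' * x ^ (3 ^ (h + 1) + 2) + b' * u * x) - φ b' * u ^ 2 * x := by
      rw [pow_add, ← hφ x]
      simp only [map_add, map_mul, map_pow, hφφ]
      ring
    rw [h1, map_sub, hφ (_ + _), rt_trace_pow, ← map_sub]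
    congr 1; ring
  have main := rt_sum_dvd ρ τ w hτ0 hρτ hker ψ
    (fun x => by rw [hψ, hψ]; have := rt_trace_pow 1 x; rw [pow_one] at this; rw [this])
    (fun x => by rw [hψ, map_pow, hρw, one_pow]) hh ((3 ^ (2 * h + 1) - 1) / 2) (3 ^ (h + 1) + 2)
    (2 * h + 1) (by
      intro j k hj hk hd
      rw [hcard] at hj hk hd
      exact rt_digit h j k hj hk hd) b' (b' * u - φ b' * u ^ 2)
  convert main using 1
  rw [← Finset.sum_sdiff (Finset.subset_univ {(0 : F)}), Finset.sum_singleton]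
  simp only [MulChar.map_zero, Int.cast_zero, zero_mul, add_zero]
  apply Finset.sum_congr rfl
  intro x hx
  simp only [Finset.mem_sdiff, Finset.mem_univ, Finset.mem_singleton, true_and] at hx
  rw [hτχ x hx, hψ, htr]

theorem rt_core {F : Type*} [Field F] [Fintype F] [DecidableEq F] [Algebra (ZMod 3) F]
    [CharP F 3] (h : ℕ) (hcard : Fintype.card F = 3 ^ (2 * h + 1)) (φ : F →+* F)
    (hφ : ∀ x, φ x = x ^ 3 ^ (h + 1)) (hφφ : ∀ z, φ (φ z) = z ^ 3) (u : F) (hu : u ≠ 0) :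
    (∑ x : F, if Algebra.trace (ZMod 3) F
      (φ x ^ 2 * x ^ 3 + φ u * φ x - u ^ 2 * x) = 1 then quadraticChar F x else 0 : ℤ) ^ 2 = 9 ^ h := by
  have hh : 2 < Fintype.card F := by
    rw [hcard, pow_succ]
    have : 0 < 3 ^ (2 * h) := by positivity
    omega
  have hodd : Odd (Fintype.card F) := by rw [hcard]; exact Odd.pow (by decide)
  have hr : Function.Bijective (fun x => φ x ^ 2 * x ^ 3 + φ u * φ x - u ^ 2 * x) :=
    Finite.injective_iff_bijective.mp (rt_inj φ hφφ u hu)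
  have hpar := rt_parseval (rt_neg_one h hcard) _ hr (by
    intro x
    simp only [map_neg]; ring)
  set N : F → ℤ := fun b => ∑ x : F, if Algebra.trace (ZMod 3) F
      (b * (φ x ^ 2 * x ^ 3 + φ u * φ x - u ^ 2 * x)) = 1 then quadraticChar F x else 0 with hN
  have hpar' : 3 * ∑ b : F, N b ^ 2 = (Fintype.card F : ℤ) * (Fintype.card F - 1) := hpar
  have hN0 : N 0 = 0 := by
    simp only [hN, zero_mul, map_zero]
    simp
  have hge : ∀ b : F, b ≠ 0 → 0 ≤ N b ^ 2 - 9 ^ h := by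
    intro b hb
    have h1 : (3 : ℤ) ^ h ∣ N b := rt_three_dvd h hcard hh φ hφ hφφ u b
    have h2 : N b ≠ 0 := by
      have hbb : Function.Bijective (fun y : F => b * y) := mulLeft_bijective₀ b hb
      exact rt_odd hodd (fun x => b * (φ x ^ 2 * x ^ 3 + φ u * φ x - u ^ 2 * x))
        (hbb.comp hr) (by simp)
    obtain ⟨k, hk⟩ := h1
    have hk0 : k ≠ 0 := by rintro rfl; simp [hk] at h2
    have h3 : 1 ≤ k ^ 2 := by
      have := sq_nonneg k
      have : k ^ 2 ≠ 0 := pow_ne_zero 2 hk0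
      omega
    have h9 : (9 : ℤ) ^ h = (3 ^ h) ^ 2 := by rw [← pow_mul, mul_comm, pow_mul]; norm_num
    rw [hk, mul_pow, ← h9]
    have : (0 : ℤ) < 9 ^ h := by positivity
    nlinarith
  have hq9 : (Fintype.card F : ℤ) = 3 * 9 ^ h := by
    rw [hcard]; push_cast; rw [pow_succ, pow_mul]; norm_num; ring
  have hzero : ∑ b ∈ Finset.univ.erase (0 : F), (N b ^ 2 - 9 ^ h) = 0 := by
    rw [Finset.sum_sub_distrib, Finset.sum_const, Finset.card_erase_of_mem (Finset.mem_univ _),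
      Finset.card_univ, nsmul_eq_mul, Nat.cast_sub Fintype.card_pos]
    rw [← Finset.add_sum_erase _ _ (Finset.mem_univ (0 : F)), hN0] at hpar'
    push_cast
    have : (3 : ℤ) * (∑ x ∈ Finset.univ.erase 0, N x ^ 2 - ((Fintype.card F : ℤ) - 1) * 9 ^ h) = 0 := by
      linear_combination hpar' + ((Fintype.card F : ℤ) - 1) * hq9
    have := (mul_eq_zero.mp this).resolve_left (by norm_num)
    exact this
  rw [Finset.sum_eq_zero_iff_of_nonneg (fun b hb => hge b (Finset.ne_of_mem_erase hb))] at hzero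
  have h1 := hzero 1 (Finset.mem_erase.mpr ⟨one_ne_zero, Finset.mem_univ _⟩)
  simp only [hN, one_mul] at h1
  linarith

open Complex in
theorem reeTits_char_sum {F : Type*} [Field F] [Fintype F] [DecidableEq F]
    [Algebra (ZMod 3) F] (h : ℕ)
    (hcard : Fintype.card F = 3 ^ (2 * h + 1)) (β a : F) (hβ : β ≠ 0) (ha : a ≠ 0) :
    let α := 3 ^ (h + 1)
    let ψ : F → ℂ := fun x => Complex.exp (2 * Real.pi * Complex.I * ((Algebra.trace (ZMod 3) F x).val : ℂ) / 3)
    (∑ x ∈ Finset.univ \ {0}, ((quadraticChar F x : ℤ) : ℂ) *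
          ψ (x ^ (α + 2) + (β ^ (α - 1) * a ^ α - β ^ (2 * (α - 1)) * a ^ (2 * α)) * x)) ^ 2
      = -((3 : ℂ) ^ (2 * h + 1)) := by
  intro α ψ
  have hch : CharP F 3 := charP_of_injective_algebraMap (algebraMap (ZMod 3) F).injective 3
  let φ : F →+* F := iterateFrobenius F 3 (h + 1)
  have hφ : ∀ x, φ x = x ^ 3 ^ (h + 1) := fun x => iterateFrobenius_def 3 (h + 1) x
  have hφφ : ∀ z, φ (φ z) = z ^ 3 := by
    intro z
    rw [hφ, hφ, ← pow_mul, ← pow_add, show h + 1 + (h + 1) = (2 * h + 1) + 1 by ring, pow_succ,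
      pow_mul, ← hcard, FiniteField.pow_card]
  set u : F := β ^ (α - 1) * a ^ α with hu
  have hu0 : u ≠ 0 := mul_ne_zero (pow_ne_zero _ hβ) (pow_ne_zero _ ha)
  have hu2 : β ^ (2 * (α - 1)) * a ^ (2 * α) = u ^ 2 := by rw [hu]; ring
  have htr : ∀ x : F, Algebra.trace (ZMod 3) F
      (x ^ (α + 2) + (u - β ^ (2 * (α - 1)) * a ^ (2 * α)) * x)
      = Algebra.trace (ZMod 3) F (φ x ^ 2 * x ^ 3 + φ u * φ x - u ^ 2 * x) := by
    intro x
    have h1 : φ x ^ 2 * x ^ 3 + φ u * φ x - u ^ 2 * x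
        = φ (x ^ (α + 2) + u * x) - u ^ 2 * x := by
      rw [pow_add, ← hφ x]
      simp only [map_add, map_mul, map_pow, hφφ]
      ring
    rw [h1, map_sub, hφ (_ + _), rt_trace_pow, ← map_sub, hu2]
    congr 1; ring
  have hprim : IsPrimitiveRoot (Complex.exp (2 * Real.pi * Complex.I / 3)) 3 := by
    have := Complex.isPrimitiveRoot_exp 3 (by norm_num)
    exact_mod_cast this
  set w := Complex.exp (2 * Real.pi * Complex.I / 3) with hw
  have hw3 : w ^ 3 = 1 := hprim.pow_eq_one
  have hw1 : w ≠ 1 := hprim.ne_one (by norm_num)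
  have hw2 : 1 + w + w ^ 2 = 0 := by
    have : (w - 1) * (1 + w + w ^ 2) = 0 := by linear_combination hw3
    exact (mul_eq_zero.mp this).resolve_left (sub_ne_zero.mpr hw1)
  have hψ : ∀ x, ψ x = w ^ (Algebra.trace (ZMod 3) F x).val := by
    intro x
    simp only [ψ, hw]
    rw [← Complex.exp_nat_mul]
    congr 1; ring
  have hsplit := rt_split (R := ℂ) (fun x => Algebra.trace (ZMod 3) F
      (φ x ^ 2 * x ^ 3 + φ u * φ x - u ^ 2 * x)) (by
        intro x
        rw [← map_neg (Algebra.trace (ZMod 3) F), map_neg φ]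
        congr 1; ring) (rt_neg_one h hcard) w
  have hcore := rt_core h hcard φ hφ hφφ u hu0
  have hS : ∑ x ∈ Finset.univ \ {0}, ((quadraticChar F x : ℤ) : ℂ) *
          ψ (x ^ (α + 2) + (u - β ^ (2 * (α - 1)) * a ^ (2 * α)) * x)
      = ∑ x : F, ((quadraticChar F x : ℤ) : ℂ) * w ^ (Algebra.trace (ZMod 3) F
      (φ x ^ 2 * x ^ 3 + φ u * φ x - u ^ 2 * x)).val := by
    rw [← Finset.sum_sdiff (Finset.subset_univ {(0 : F)}), Finset.sum_singleton]
    simp only [MulChar.map_zero, Int.cast_zero, zero_mul, add_zero]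
    apply Finset.sum_congr rfl
    intro x _
    rw [hψ, htr]
  rw [hS, hsplit, mul_pow, ← Int.cast_pow, hcore]
  have hww : (w - w ^ 2) ^ 2 = -3 := by linear_combination (w ^ 2 - 3 * w + 3) * hw2
  rw [hww, pow_succ, pow_mul]
  push_cast
  norm_num
end

section
/- With the periodic carry-sequence setup (m odd, r = (m+1)/2, sequences (a_i), (c_i) periodic with period m, 0 ≤ a_i ≤ 2, 0 ≤ c_i ≤ 3, b_i = 5 + a_i − a_{i−1} − a_{i−r}, and 0 ≤ b_i − 3c_i + c_{i−1} ≤ 2 for all i ∈ ℤ): the carries satisfy Σ_{i=0}^{m−1} c_i ≤ 2m. -/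
/-- Potential on the states `(a (i-r), a (i-1), c (i-r), c (i-1))`, with values in `{0,1,2}`,
encoded as the base-3 digits of a numeral. -/
def carryPot (p q u v : ℕ) : ℕ :=
  5578193756235814429354777869828363193730907131573602021087104769266
    / 3 ^ (((p * 3 + q) * 4 + u) * 4 + v) % 3

theorem carryPot_step : ∀ x x1 x2 : Fin 3, ∀ y y1 y2 : Fin 4,
    (x1.val + x2.val + 3 * y.val ≤ 5 + x.val + y2.val ∧
      5 + x.val + y2.val ≤ 2 + x1.val + x2.val + 3 * y.val) →
    y.val + carryPot x1 x2 y1 y2 ≤ carryPot x x1 y y1 + 2 := by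
  decide +kernel

theorem carryPot_step_int (x x1 x2 y y1 y2 : ℤ)
    (hx : 0 ≤ x ∧ x ≤ 2) (hx1 : 0 ≤ x1 ∧ x1 ≤ 2) (hx2 : 0 ≤ x2 ∧ x2 ≤ 2)
    (hy : 0 ≤ y ∧ y ≤ 3) (hy1 : 0 ≤ y1 ∧ y1 ≤ 3) (hy2 : 0 ≤ y2 ∧ y2 ≤ 3)
    (h : 0 ≤ (5 + x - x2 - x1) - 3 * y + y2 ∧ (5 + x - x2 - x1) - 3 * y + y2 ≤ 2) :
    y + (carryPot x1.toNat x2.toNat y1.toNat y2.toNat : ℤ)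
      ≤ (carryPot x.toNat x1.toNat y.toNat y1.toNat : ℤ) + 2 := by
  have key := carryPot_step ⟨x.toNat, by omega⟩ ⟨x1.toNat, by omega⟩ ⟨x2.toNat, by omega⟩
    ⟨y.toNat, by omega⟩ ⟨y1.toNat, by omega⟩ ⟨y2.toNat, by omega⟩
    ⟨by simp only; omega, by simp only; omega⟩
  simp only at key
  omega

theorem sum_shift_periodic (m : ℕ) (f : ℤ → ℤ) (hf : ∀ i : ℤ, f (i + m) = f i) (k : ℕ) :
    ∑ i ∈ Finset.range m, f ((i : ℤ) + k) = ∑ i ∈ Finset.range m, f (i : ℤ) := by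
  induction k with
  | zero => simp
  | succ k ih =>
    rw [← ih]
    have h1 := Finset.sum_range_succ (fun i : ℕ => f ((i : ℤ) + k)) m
    have h2 := Finset.sum_range_succ' (fun i : ℕ => f ((i : ℤ) + k)) m
    have h3 : f ((m : ℤ) + k) = f k := by rw [add_comm]; exact hf k
    have h4 : ∀ i : ℕ, f ((i : ℤ) + ((k + 1 : ℕ) : ℤ)) = f (((i + 1 : ℕ) : ℤ) + k) := by
      intro i; congr 1; push_cast; ring
    simp only [h4]
    simp only [Nat.cast_zero, zero_add] at h2
    linarith

theorem carry_sum_bound (m : ℕ) (hm : Odd m)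
    (a c : ℤ → ℤ)
    (ha_per : ∀ i : ℤ, a (i + m) = a i) (hc_per : ∀ i : ℤ, c (i + m) = c i)
    (ha : ∀ i : ℤ, 0 ≤ a i ∧ a i ≤ 2) (hc : ∀ i : ℤ, 0 ≤ c i ∧ c i ≤ 3)
    (hs : ∀ i : ℤ,
      0 ≤ (5 + a i - a (i - 1) - a (i - ((m : ℤ) + 1) / 2)) - 3 * c i + c (i - 1) ∧
      (5 + a i - a (i - 1) - a (i - ((m : ℤ) + 1) / 2)) - 3 * c i + c (i - 1) ≤ 2) :
    ∑ i ∈ Finset.range m, c (i : ℤ) ≤ 2 * (m : ℤ) := by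
  obtain ⟨k, rfl⟩ := hm
  have hr : (((2 * k + 1 : ℕ) : ℤ) + 1) / 2 = ((k + 1 : ℕ) : ℤ) := by push_cast; omega
  rw [hr] at hs
  set r : ℤ := ((k + 1 : ℕ) : ℤ) with hrdef
  let P : ℤ → ℤ := fun i =>
    (carryPot (a (i - r)).toNat (a (i - 1)).toNat (c (i - r)).toNat (c (i - 1)).toNat : ℤ)
  have shift : ∀ f : ℤ → ℤ, (∀ i : ℤ, f (i + ((2 * k + 1 : ℕ) : ℤ)) = f i) →
      ∀ i, f (i + r - 1) = f (i - r) := by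
    intro f hf i
    rw [← hf (i - r)]
    congr 1
    rw [hrdef]; push_cast; ring
  have hP : ∀ i : ℤ, P (i + ((2 * k + 1 : ℕ) : ℤ)) = P i := by
    intro i
    simp only [P, add_sub_right_comm, ha_per, hc_per]
  have step : ∀ i : ℤ, c i + P i ≤ P (i + r) + 2 := by
    intro i
    have := carryPot_step_int (a i) (a (i - r)) (a (i - 1)) (c i) (c (i - r)) (c (i - 1))
      (ha _) (ha _) (ha _) (hc _) (hc _) (hc _) (hs i)
    simp only [P, shift a ha_per, shift c hc_per, add_sub_cancel_right]
    exact this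
  have hsum := Finset.sum_le_sum (s := Finset.range (2 * k + 1)) fun i _ => step (i : ℤ)
  rw [Finset.sum_add_distrib, Finset.sum_add_distrib, sum_shift_periodic _ P hP (k + 1)] at hsum
  simp only [Finset.sum_const, Finset.card_range, nsmul_eq_mul] at hsum
  linarith
end
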